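/- arXiv:0710.2767 — 3 statements merged into one kernel-verified Lean document; each statement's English description precedes it below -/
import Mathlib

section
/- Assume p ∤ (m/t), d | h, and a = 0. Then M_t = (q−1) · Σ_{x ∈ F_{q^t}^*} e_t(γ_t^{i_0}·x^l) = (q−1) · Σ_{λ ∈ H_l} G_t(λ̄) · λ(g^{i_0}), where l = gcd(t, s/d). -/
noncomputable section

open Complex Polynomial Classical

/-- The canonical additive character `x ↦ exp(2πi·tr(x)/p)` of a finite field `E`
of characteristic `p` (the prime field being `ZMod p`). -/
def eChar (p : ℕ) (E : Type*) [Field E] [Fintype E] [Algebra (ZMod p) E] (x : E) : ℂ :=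
  Complex.exp (2 * Real.pi * Complex.I * ((Algebra.trace (ZMod p) E x).val : ℂ) / (p : ℂ))

/-- The Gauss sum `G_t(λ) = Σ_{x ∈ E^*} e_t(x)·λ(N_{E/F}(x))` over `E`, for a
multiplicative character `λ` of `F`. -/
def gaussSumN (p : ℕ) (F E : Type*) [Field F] [Fintype F] [Field E] [Fintype E]
    [Algebra F E] [Algebra (ZMod p) E] (lam : MulChar F ℂ) : ℂ :=
  ∑ x : Eˣ, eChar p E (x : E) * lam (Algebra.norm F (x : E))

/-- `M_t = Σ_{c∈F^*} e_1(−(t/m)·c·a)·Σ_{x∈E^*} e_t(c·γ^{i_0}·x^{s/d})`, where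
`mt = m/t`, `sd = s/d` and `(t/m)` is the inverse of `m/t` in the prime field. -/
def MM (p : ℕ) (F E : Type*) [Field F] [Fintype F] [Field E] [Fintype E]
    [Algebra F E] [Algebra (ZMod p) F] [Algebra (ZMod p) E]
    (γ : E) (a : F) (mt sd i0 : ℕ) : ℂ :=
  ∑ c : Fˣ, eChar p F (-(((mt : F))⁻¹ * c * a)) *
    ∑ x : Eˣ, eChar p E (algebraMap F E (c : F) * γ ^ i0 * (x : E) ^ sd)

/-!
With `a = 0` the outer character in `M_t` is trivial, so `M_t` sums `y ↦ e_t(βy)`, `β = γ^i₀`,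
over the image of `(c, x) ↦ c·xⁿ`, `n = s/d`. Since the norm is surjective and equals `y ↦ y^S`
with `S = 1 + q + ⋯ + q^(t-1)`, the subgroup `F^*` consists of the `S`-th powers of `E^*`. Hence
that image is the group of `gcd(S, n)`-th powers, and `gcd(S, n) = gcd(t, n) = l` because
`q ≡ 1 (mod n)`.

For the second formula, `l` divides both `|F^*|` and `|E^*|`, so the groups of `l`-th powers in
`F^*` and in `E^*` both have index `l`, as does the preimage of the former under the surjective
norm. This preimage contains the latter, so `y` is an `l`-th power exactly when `N(y)` is. By
duality the number of `l`-th roots of `y` in `E^*` is then `Σ_{λ ∈ H_l} λ(N(y))`, and the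
substitution `y ↦ βy` produces the Gauss sums.
-/

section FiniteGroup

variable {A B C M : Type*} [Group A] [Group B] [Group C] [Fintype A] [Fintype B] [AddCommMonoid M]

theorem sum_comp_eq_card_ker_nsmul_sum_image [DecidableEq C] (φ : A →* C) (f : C → M) :
    ∑ a, f (φ a) = Nat.card φ.ker • ∑ c ∈ Finset.univ.image φ, f c := by
  rw [Finset.sum_comp f φ, Finset.smul_sum]
  refine Finset.sum_congr rfl fun c hc => ?_
  have hc : c ∈ φ.range := by simpa using hc
  rw [MonoidHom.card_fiber_eq_of_mem_range φ hc φ.range.one_mem, Nat.card_eq_fintype_card,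
    Fintype.card_subtype]
  simp only [MonoidHom.mem_ker]

theorem sum_comp_eq_nsmul_sum_comp_of_range_eq {φ : A →* C} {ψ : B →* C} (h : φ.range = ψ.range)
    {k : ℕ} (hk : Nat.card A = k * Nat.card B) (f : C → M) :
    ∑ a, f (φ a) = k • ∑ b, f (ψ b) := by
  have card_ker : Nat.card φ.ker = k * Nat.card ψ.ker := by
    refine Nat.eq_of_mul_eq_mul_right (Nat.card_pos (α := ψ.range)) ?_
    rw [mul_assoc, ← Subgroup.index_ker ψ, Subgroup.card_mul_index, ← hk, Subgroup.index_ker, ← h,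
      ← Subgroup.index_ker φ, Subgroup.card_mul_index]
  have image_eq : Finset.univ.image φ = Finset.univ.image ψ := by
    simpa [← Finset.coe_inj] using congrArg SetLike.coe h
  rw [sum_comp_eq_card_ker_nsmul_sum_image, sum_comp_eq_card_ker_nsmul_sum_image, card_ker,
    image_eq, mul_nsmul']

end FiniteGroup

section PowerSubgroup

theorem range_powMonoidHom_sup_range_powMonoidHom {G : Type*} [CommGroup G] (a b : ℕ) :
    (powMonoidHom a : G →* G).range ⊔ (powMonoidHom b : G →* G).range =
      (powMonoidHom (a.gcd b) : G →* G).range := by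
  apply le_antisymm
  · have range_le_of_dvd {c : ℕ} (hc : a.gcd b ∣ c) :
        (powMonoidHom c : G →* G).range ≤ (powMonoidHom (a.gcd b)).range := by
      rintro _ ⟨x, rfl⟩
      obtain ⟨k, rfl⟩ := hc
      exact ⟨x ^ k, by simp only [powMonoidHom_apply, pow_mul']⟩
    exact sup_le (range_le_of_dvd (Nat.gcd_dvd_left a b)) (range_le_of_dvd (Nat.gcd_dvd_right a b))
  · rintro _ ⟨x, rfl⟩
    refine Subgroup.mem_sup.mpr ⟨_, ⟨x ^ a.gcdA b, rfl⟩, _, ⟨x ^ a.gcdB b, rfl⟩, ?_⟩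
    simp only [powMonoidHom_apply, ← zpow_natCast, ← zpow_mul, ← zpow_add, Nat.gcd_eq_gcd_ab,
      mul_comm]

theorem range_monoidHom_coprod {A B G : Type*} [Group A] [Group B] [CommGroup G] (φ : A →* G)
    (ψ : B →* G) : (φ.coprod ψ).range = φ.range ⊔ ψ.range := by
  ext y
  simp [Subgroup.mem_sup]

theorem comap_range_powMonoidHom_of_surjective {A B : Type*} [CommGroup A] [CommGroup B] [Finite A]
    {N : A →* B} (hN : Function.Surjective N) {l : ℕ}
    (h : Nat.card (powMonoidHom l : A →* A).ker = Nat.card (powMonoidHom l : B →* B).ker) :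
    (powMonoidHom l).range.comap N = (powMonoidHom l : A →* A).range := by
  have : Finite B := Finite.of_surjective N hN
  have le : (powMonoidHom l : A →* A).range ≤ (powMonoidHom l).range.comap N := by
    rintro _ ⟨x, rfl⟩
    exact ⟨N x, by simp only [powMonoidHom_apply, map_pow]⟩
  refine (Subgroup.eq_of_le_of_card_ge le ?_).symm
  refine Nat.le_of_mul_le_mul_right ?_
    (Nat.pos_of_ne_zero (powMonoidHom l : A →* A).range.index_ne_zero_of_finite)
  rw [Subgroup.card_mul_index, Subgroup.index_range, h, ← Subgroup.index_range,
    ← Subgroup.index_comap_of_surjective _ hN, Subgroup.card_mul_index]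

theorem geom_sum_modEq_of_modEq_one {q n : ℕ} (h : q ≡ 1 [MOD n]) (t : ℕ) :
    ∑ i ∈ Finset.range t, q ^ i ≡ t [MOD n] := by
  rw [← ZMod.natCast_eq_natCast_iff] at h ⊢
  simp [h]

end PowerSubgroup

section MulCharDuality

variable {M R : Type*} [CommMonoid M] [Finite M] [CommRing R]
  [HasEnoughRootsOfUnity R (Monoid.exponent Mˣ)]

theorem exists_mulChar_pow_eq_one_apply_ne_one {l : ℕ} {u : Mˣ}
    (hu : u ∉ (powMonoidHom l : Mˣ →* Mˣ).range) :
    ∃ χ : MulChar M R, χ ^ l = 1 ∧ χ u ≠ 1 := by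
  set H := (powMonoidHom l : Mˣ →* Mˣ).range
  let D := MulChar.subgroupOrderIsoSubgroupMulChar M R
  rw [← D.symm_apply_apply H] at hu
  obtain ⟨χ, hχ, hχu⟩ : ∃ χ ∈ (D H).ofDual, χ u ≠ 1 := by
    simpa [D] using
      (MulChar.mem_subgroupOrderIsoSubgroupMulChar_symm_iff (X := (D H).ofDual)).not.mp hu
  refine ⟨χ, MulChar.ext fun v => ?_, hχu⟩
  rw [MulChar.pow_apply_coe, ← map_pow, MulChar.one_apply_coe]
  exact MulChar.mem_subgroupOrderIsoSubgroupMulChar_iff.mp hχ (v ^ l) ⟨v, rfl⟩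

variable [Fintype (MulChar M R)] [DecidableEq (MulChar M R)]

theorem card_mulChar_pow_eq_one (l : ℕ) :
    (Finset.univ.filter fun χ : MulChar M R => χ ^ l = 1).card =
      Nat.card (powMonoidHom l : Mˣ →* Mˣ).ker := by
  obtain ⟨e⟩ := MulChar.mulEquiv_units M R
  rw [← Fintype.card_subtype, ← Nat.card_eq_fintype_card]
  exact Nat.card_congr (e.toEquiv.subtypeEquiv fun χ => by simp [MonoidHom.mem_ker, ← map_pow])

theorem sum_mulChar_pow_eq_one_apply [IsDomain R] (l : ℕ) (u : Mˣ)
    [Decidable (u ∈ (powMonoidHom l : Mˣ →* Mˣ).range)] :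
    ∑ χ : MulChar M R with χ ^ l = 1, χ u =
      if u ∈ (powMonoidHom l : Mˣ →* Mˣ).range
        then (Nat.card (powMonoidHom l : Mˣ →* Mˣ).ker : R) else 0 := by
  split_ifs with hu
  · obtain ⟨v, rfl⟩ := hu
    have apply_eq_one : ∀ χ ∈ Finset.univ.filter (fun χ : MulChar M R => χ ^ l = 1),
        χ (powMonoidHom l v : Mˣ) = 1 := by
      intro χ hχ
      rw [powMonoidHom_apply, Units.val_pow_eq_pow_val, map_pow, ← MulChar.pow_apply_coe,
        (Finset.mem_filter.mp hχ).2, MulChar.one_apply_coe]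
    rw [Finset.sum_congr rfl apply_eq_one, Finset.sum_const, card_mulChar_pow_eq_one, nsmul_one]
  · obtain ⟨ψ, hψ, hψu⟩ := exists_mulChar_pow_eq_one_apply_ne_one (R := R) hu
    refine eq_zero_of_mul_eq_self_left hψu ?_
    rw [Finset.mul_sum]
    exact Finset.sum_equiv (Equiv.mulLeft ψ) (by simp [mul_pow, hψ]) (by simp)

end MulCharDuality

section FiniteFieldExtension

variable {F E : Type*} [Field F] [Field E] [Algebra F E]

theorem range_unitsMap_algebraMap_eq_range_powMonoidHom [Finite E] :
    (Units.map (algebraMap F E : F →* E)).range =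
      (powMonoidHom (∑ i ∈ Finset.range (Module.finrank F E), Nat.card F ^ i) :
        Eˣ →* Eˣ).range := by
  have : Finite F := Finite.of_injective _ (algebraMap F E).injective
  have pow_eq_comp : powMonoidHom (∑ i ∈ Finset.range (Module.finrank F E), Nat.card F ^ i) =
      (Units.map (algebraMap F E : F →* E)).comp (Units.map (Algebra.norm F : E →* F)) := by
    ext y
    simp [FiniteField.algebraMap_norm_eq_pow_sum]
  rw [pow_eq_comp, MonoidHom.range_comp,
    MonoidHom.range_eq_top.mpr (FiniteField.unitsMap_norm_surjective F E), ← MonoidHom.range_eq_map]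

theorem range_unitsMap_algebraMap_coprod_powMonoidHom [Finite E] {n : ℕ}
    (hn : n ∣ Nat.card F - 1) :
    ((Units.map (algebraMap F E : F →* E)).coprod (powMonoidHom n : Eˣ →* Eˣ)).range =
      (powMonoidHom ((Module.finrank F E).gcd n) : Eˣ →* Eˣ).range := by
  have : Finite F := Finite.of_injective _ (algebraMap F E).injective
  have card_modEq_one : Nat.card F ≡ 1 [MOD n] := ((Nat.modEq_iff_dvd' Nat.card_pos).mpr hn).symm
  rw [range_monoidHom_coprod, range_unitsMap_algebraMap_eq_range_powMonoidHom,
    range_powMonoidHom_sup_range_powMonoidHom,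
    (geom_sum_modEq_of_modEq_one card_modEq_one _).gcd_eq]

variable (F) in
theorem card_ker_powMonoidHom_units [Finite F] {l : ℕ} (hl : l ∣ Nat.card F - 1) :
    Nat.card (powMonoidHom l : Fˣ →* Fˣ).ker = l := by
  rw [IsCyclic.card_powMonoidHom_ker, Nat.card_units, Nat.gcd_eq_right hl]

variable (F E) in
theorem natCard_sub_one_dvd_natCard_sub_one [Finite E] : Nat.card F - 1 ∣ Nat.card E - 1 := by
  have : Finite F := Finite.of_injective _ (algebraMap F E).injective
  have unitsMap_injective : Function.Injective (Units.map (algebraMap F E : F →* E)) :=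
    Units.map_injective (algebraMap F E).injective
  simpa only [Nat.card_units] using Subgroup.card_dvd_of_injective _ unitsMap_injective

theorem unitsMap_norm_mem_range_powMonoidHom_iff [Finite E] {l : ℕ} (hl : l ∣ Nat.card F - 1)
    (y : Eˣ) : Units.map (Algebra.norm F) y ∈ (powMonoidHom l : Fˣ →* Fˣ).range ↔
      y ∈ (powMonoidHom l : Eˣ →* Eˣ).range := by
  have : Finite F := Finite.of_injective _ (algebraMap F E).injective
  rw [← comap_range_powMonoidHom_of_surjective (FiniteField.unitsMap_norm_surjective F E)]
  · exact Iff.rfl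
  · rw [card_ker_powMonoidHom_units F hl, card_ker_powMonoidHom_units E
      (hl.trans (natCard_sub_one_dvd_natCard_sub_one F E))]

variable [Fintype F] [Fintype E]

theorem sum_sum_algebraMap_mul_pow {M : Type*} [AddCommMonoid M] {n : ℕ}
    (hn : n ∣ Nat.card F - 1) (f : Eˣ → M) :
    ∑ c : Fˣ, ∑ x : Eˣ, f (Units.map (algebraMap F E) c * x ^ n) =
      Nat.card Fˣ • ∑ x : Eˣ, f (x ^ (Module.finrank F E).gcd n) := by
  rw [← Fintype.sum_prod_type']
  exact sum_comp_eq_nsmul_sum_comp_of_range_eq (range_unitsMap_algebraMap_coprod_powMonoidHom hn)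
    (Nat.card_prod _ _) f

theorem sum_pow_eq_sum_sum_mul_mulChar_norm {R : Type*} [CommRing R] [IsDomain R]
    [HasEnoughRootsOfUnity R (Monoid.exponent Fˣ)] [Fintype (MulChar F R)] {l : ℕ}
    (hl : l ∣ Nat.card F - 1) (f : Eˣ → R) :
    ∑ x : Eˣ, f (x ^ l) = ∑ χ : MulChar F R with χ ^ l = 1,
      ∑ y : Eˣ, f y * χ (Algebra.norm F (y : E)) := by
  have sum_char (y : Eˣ) : ∑ χ : MulChar F R with χ ^ l = 1, χ (Algebra.norm F (y : E)) =
      if y ∈ (powMonoidHom l : Eˣ →* Eˣ).range then (l : R) else 0 := by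
    have sum_eq := sum_mulChar_pow_eq_one_apply (R := R) l (Units.map (Algebra.norm F) y)
    rw [card_ker_powMonoidHom_units F hl, Units.coe_map] at sum_eq
    exact sum_eq.trans <| if_congr (unitsMap_norm_mem_range_powMonoidHom_iff hl y) rfl rfl
  have image_eq : Finset.univ.image (powMonoidHom l : Eˣ →* Eˣ) =
      Finset.univ.filter (· ∈ (powMonoidHom l : Eˣ →* Eˣ).range) := by
    ext y
    simp
  rw [Finset.sum_comm]
  simp only [← Finset.mul_sum, sum_char, mul_ite, mul_zero]
  rw [← Finset.sum_filter, ← image_eq, ← Finset.sum_mul, mul_comm, ← nsmul_eq_mul]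
  simpa only [powMonoidHom_apply,
    card_ker_powMonoidHom_units E (hl.trans (natCard_sub_one_dvd_natCard_sub_one F E))]
    using sum_comp_eq_card_ker_nsmul_sum_image (powMonoidHom l) f

end FiniteFieldExtension

section GaussSum

variable {p : ℕ} {F E : Type*} [Field F] [Fintype F] [Field E] [Fintype E] [Algebra F E]
  [Algebra (ZMod p) E]

theorem sum_eChar_mul_mulChar_norm (χ : MulChar F ℂ) (β : Eˣ) :
    ∑ y : Eˣ, eChar p E (β * y) * χ (Algebra.norm F (y : E)) =
      gaussSumN p F E χ * χ⁻¹ (Algebra.norm F (β : E)) := by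
  have hβ : χ (Algebra.norm F (β : E)) * χ⁻¹ (Algebra.norm F (β : E)) = 1 := by
    rw [← MulChar.mul_apply, mul_inv_cancel]
    exact MulChar.one_apply (β.isUnit.map (Algebra.norm F))
  rw [gaussSumN, Finset.sum_mul]
  refine Fintype.sum_equiv (Equiv.mulLeft β) _ _ fun y => ?_
  rw [Equiv.coe_mulLeft, Units.val_mul, map_mul, map_mul]
  linear_combination (-eChar p E (β * y) * χ (Algebra.norm F (y : E))) * hβ

theorem sum_eChar_mul_pow {l : ℕ} (hl : l ∣ Nat.card F - 1) (β : Eˣ) :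
    ∑ x : Eˣ, eChar p E (β * (x : E) ^ l) =
      ∑ᶠ (χ : MulChar F ℂ) (_ : χ ^ l = 1),
        gaussSumN p F E χ⁻¹ * χ (Algebra.norm F (β : E)) := by
  have : Fintype (MulChar F ℂ) := Fintype.ofFinite _
  calc ∑ x : Eˣ, eChar p E (β * (x : E) ^ l)
      = ∑ χ : MulChar F ℂ with χ ^ l = 1,
          ∑ y : Eˣ, eChar p E (β * y) * χ (Algebra.norm F (y : E)) := by
        rw [← sum_pow_eq_sum_sum_mul_mulChar_norm hl fun y : Eˣ => eChar p E (β * y)]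
        simp only [Units.val_pow_eq_pow_val]
    _ = ∑ χ : MulChar F ℂ with χ ^ l = 1,
          gaussSumN p F E χ⁻¹ * χ (Algebra.norm F (β : E)) := by
        simp only [sum_eChar_mul_mulChar_norm]
        exact Finset.sum_equiv (Equiv.inv _) (by simp) (by simp)
    _ = _ := by
        rw [← finsum_mem_finset_eq_sum]
        simp only [Finset.mem_filter, Finset.mem_univ, true_and]

theorem MM_zero [Algebra (ZMod p) F] {n : ℕ} (hn : n ∣ Nat.card F - 1) (γ : Eˣ) (k i : ℕ) :
    MM p F E γ 0 k n i = ((Fintype.card F : ℂ) - 1) *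
      ∑ x : Eˣ, eChar p E ((γ : E) ^ i * (x : E) ^ (Module.finrank F E).gcd n) := by
  have eChar_zero : eChar p F 0 = 1 := by simp [eChar]
  have card_units : (Nat.card Fˣ : ℂ) = Fintype.card F - 1 := by
    rw [Nat.card_units, Nat.cast_pred Nat.card_pos, Nat.card_eq_fintype_card]
  have sum_eq := sum_sum_algebraMap_mul_pow hn fun y : Eˣ => eChar p E ((γ : E) ^ i * (y : E))
  rw [nsmul_eq_mul, card_units] at sum_eq
  simpa [MM, eChar_zero, mul_left_comm, mul_assoc] using sum_eq

end GaussSum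

theorem stmt4_general (p t n l k i : ℕ) [Fact p.Prime]
    (F E : Type*) [Field F] [Fintype F] [Field E] [Fintype E]
    [Algebra F E] [Algebra (ZMod p) F] [Algebra (ZMod p) E]
    (hE : Fintype.card E = Fintype.card F ^ t) (g : F) (γ : Eˣ)
    (hγg : Algebra.norm F (γ : E) = g) (hn : n ∣ Fintype.card F - 1) (hl : l = t.gcd n) :
    MM p F E γ 0 k n i =
      ((Fintype.card F : ℂ) - 1) * ∑ x : Eˣ, eChar p E ((γ : E) ^ i * (x : E) ^ l) ∧
    MM p F E γ 0 k n i =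
      ((Fintype.card F : ℂ) - 1) *
        ∑ᶠ (χ : MulChar F ℂ) (_ : χ ^ l = 1), gaussSumN p F E χ⁻¹ * χ (g ^ i) := by
  have finrank_eq : Module.finrank F E = t :=
    Nat.pow_right_injective Fintype.one_lt_card (Module.card_eq_pow_finrank.symm.trans hE)
  have hlq : l ∣ Fintype.card F - 1 := hl ▸ (Nat.gcd_dvd_right t n).trans hn
  rw [← Nat.card_eq_fintype_card] at hn hlq
  have sum_pow_eq := MM_zero (p := p) hn γ k i
  rw [finrank_eq, ← hl] at sum_pow_eq
  have sum_pow_eq_gaussSum := sum_eChar_mul_pow (p := p) hlq (γ ^ i)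
  rw [Units.val_pow_eq_pow_val, map_pow, hγg] at sum_pow_eq_gaussSum
  exact ⟨sum_pow_eq, sum_pow_eq_gaussSum ▸ sum_pow_eq⟩

/-- If `p ∤ m/t`, `d ∣ h` and `a = 0` then
`M_t = (q−1)·Σ_{x∈E^*} e_t(γ^{i_0}·x^l) = (q−1)·Σ_{λ∈H_l} G_t(λ̄)·λ(g^{i_0})`,
where `l = gcd(t, s/d)`. -/
theorem stmt4 (p r m s h t d l i0 : ℕ) [Fact p.Prime] (hr : 0 < r) (hm : 2 ≤ m)
    (ht : t ∣ m) (ht0 : 0 < t)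
    (F E : Type*) [Field F] [Fintype F] [Field E] [Fintype E]
    [Algebra F E] [Algebra (ZMod p) F] [Algebra (ZMod p) E]
    (hF : Fintype.card F = p ^ r) (hE : Fintype.card E = Fintype.card F ^ t)
    (g : Fˣ) (hg : ∀ u : Fˣ, u ∈ Subgroup.zpowers g)
    (γ : Eˣ) (hγ : ∀ u : Eˣ, u ∈ Subgroup.zpowers γ)
    (hγg : Algebra.norm F ((γ : Eˣ) : E) = (g : F))
    (hs : 0 < s) (hsq : s ∣ Fintype.card F - 1) (hh : h < s)
    (hd : d = Nat.gcd (m / t) s) (hl : l = Nat.gcd t (s / d))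
    (hpmt : ¬ p ∣ m / t) (hdh : d ∣ h)
    (hi0 : i0 < s / d ∧ (m / (d * t)) * i0 ≡ h / d [MOD s / d])
    (a : F) (ha : a = 0) :
    MM p F E ((γ : Eˣ) : E) a (m / t) (s / d) i0 =
      ((Fintype.card F : ℂ) - 1) *
        ∑ x : Eˣ, eChar p E (((γ : Eˣ) : E) ^ i0 * (x : E) ^ l) ∧
    MM p F E ((γ : Eˣ) : E) a (m / t) (s / d) i0 =
      ((Fintype.card F : ℂ) - 1) *
        ∑ᶠ (lam : MulChar F ℂ) (_ : lam ^ l = 1),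
          gaussSumN p F E lam⁻¹ * lam ((g : F) ^ i0) := by
  subst ha hd
  exact stmt4_general p t _ l (m / t) i0 F E hE g γ hγg
    ((Nat.div_dvd_of_dvd (Nat.gcd_dvd_right _ _)).trans hsq) hl

end
end

section
/- Assume p ∤ (m/t), d | h, and a = 0. Then M_t = (q−1) · ( −1 + (−1)^t · q · Σ_{λ ∈ H_l^*} J_t(λ) · λ̄(g^{i_0}) ), where l = gcd(t, s/d). -/
noncomputable section

open Complex Polynomial Classical

/-- The Jacobi sum `J_t(λ) = Σ_{x_1+⋯+x_t=1} λ(x_1⋯x_t)` (with `λ(0) = 0` for nontrivial λ). -/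
def jacobiS (F : Type*) [Field F] [Fintype F] (t : ℕ) (lam : MulChar F ℂ) : ℂ :=
  ∑ v : Fin t → F, if (∑ i, v i) = 1 then lam (∏ i, v i) else 0

/-!
The condition `x ^ n = y` is detected by the characters `χ ∘ N` with `χ ^ n = 1`, where `N` is the
norm to `F`, so the inner sum of `MM` is a combination of the Gauss sums of the `χ ∘ N`. Summing
over `c` retains only those `χ` with also `χ ^ t = 1`. By the Hasse–Davenport relation the Gauss sum
of `χ ∘ N` is `-(-G) ^ t`, with `G` the Gauss sum of `χ`; here `G ^ t = -q * J_t(χ)` if `χ ≠ 1`, and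
`G = -1` if `χ = 1`.

For the Hasse–Davenport relation, the weight `∏ (X - aᵢ) ↦ χ (∏ aᵢ) * ψ (∑ aᵢ)` on monic polynomials
is completely multiplicative and its L-function is `1 + G * T`. The `t`-th coefficient of
`T * d/dT log (1 + G * T)` is `-(-G) ^ t`. It is also the sum of the weight against the von Mangoldt
function over the monic `f` of degree `t`, which is the Gauss sum of `χ ∘ N` because exactly `Λ(f)`
elements of `E` have field polynomial `f`.
-/

section Mangoldt

open UniqueFactorizationMonoid

variable {K : Type*} [Field K]

/-- The finite set of monic divisors of a nonzero polynomial, as the products of submultisets of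
its prime factors; for `f = 0` it is `{1}`. -/
def monicDivisors (f : K[X]) : Finset K[X] :=
  ((normalizedFactors f).powerset.map Multiset.prod).toFinset

/-- The von Mangoldt function of `K[X]`: the degree of `P` at a positive power of an irreducible
polynomial `P`, and `0` at all other polynomials. -/
def polyMangoldt (f : K[X]) : ℕ :=
  if IsPrimePow f then (radical f).natDegree else 0

lemma prod_normalizedFactors_of_monic {f : K[X]} (hf : f.Monic) :
    (normalizedFactors f).prod = f := by
  rw [prod_normalizedFactors_eq hf.ne_zero, hf.normalize_eq_self]

lemma mem_monicDivisors {f g : K[X]} (hf : f ≠ 0) :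
    g ∈ monicDivisors f ↔ g.Monic ∧ g ∣ f := by
  simp only [monicDivisors, Multiset.mem_toFinset, Multiset.mem_map, Multiset.mem_powerset]
  constructor
  · rintro ⟨s, hs, rfl⟩
    have hmonic : ∀ P ∈ s, P.Monic := fun P hP ↦
      ((Polynomial.mem_normalizedFactors_iff hf).mp (Multiset.mem_of_le hs hP)).2.1
    exact ⟨by simpa using monic_multiset_prod_of_monic s id hmonic,
      (Multiset.prod_dvd_prod_of_le hs).trans (prod_normalizedFactors hf).dvd⟩
  · rintro ⟨hg, hgf⟩
    exact ⟨_, (dvd_iff_normalizedFactors_le_normalizedFactors hg.ne_zero hf).mp hgf,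
      prod_normalizedFactors_of_monic hg⟩

lemma radical_pow_of_monic_irreducible {P : K[X]} (hPm : P.Monic) (hPi : Irreducible P) {k : ℕ}
    (hk : k ≠ 0) : radical (P ^ k) = P := by
  rw [radical_pow_of_prime hPi.prime hk, hPm.normalize_eq_self]

lemma polyMangoldt_pow {P : K[X]} (hPm : P.Monic) (hPi : Irreducible P) {k : ℕ} (hk : k ≠ 0) :
    polyMangoldt (P ^ k) = P.natDegree := by
  rw [polyMangoldt, if_pos (hPi.prime.isPrimePow.pow hk),
    radical_pow_of_monic_irreducible hPm hPi hk]

lemma exists_monic_irreducible_pow_eq {f : K[X]} (hf : f.Monic) (hpp : IsPrimePow f) :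
    ∃ (P : K[X]) (k : ℕ), P.Monic ∧ Irreducible P ∧ k ≠ 0 ∧ P ^ k = f := by
  obtain ⟨P, k, hP, hk, hPk⟩ := hpp
  refine ⟨normalize P, k, monic_normalize hP.ne_zero,
    (normalize_associated P).irreducible_iff.mpr hP.irreducible, hk.ne', ?_⟩
  rw [← hf.normalize_eq_self, ← hPk]
  exact (map_pow normalizeHom P k).symm

lemma sum_count_mul_natDegree {f : K[X]} (hf : f.Monic) :
    ∑ P ∈ primeFactors f, (normalizedFactors f).count P * P.natDegree = f.natDegree := by
  have hdeg := natDegree_multiset_prod_of_monic (normalizedFactors f)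
    fun P hP ↦ ((Polynomial.mem_normalizedFactors_iff hf.ne_zero).mp hP).2.1
  rw [prod_normalizedFactors_of_monic hf, Finset.sum_multiset_map_count] at hdeg
  simp only [hdeg, smul_eq_mul, toFinset_normalizedFactors]

lemma pow_mem_monicDivisors_iff {P f : K[X]} (hPm : P.Monic) (hPi : Irreducible P) (hf : f ≠ 0)
    (k : ℕ) : P ^ k ∈ monicDivisors f ↔ k ≤ (normalizedFactors f).count P := by
  rw [mem_monicDivisors hf, and_iff_right (hPm.pow k), pow_dvd_iff_le_emultiplicity,
    emultiplicity_eq_count_normalizedFactors hPi hf, hPm.normalize_eq_self, Nat.cast_le]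

lemma sum_polyMangoldt_pow {P : K[X]} (hPm : P.Monic) (hPi : Irreducible P) (n : ℕ) :
    ∑ k ∈ Finset.Icc 1 n, polyMangoldt (P ^ k) = n * P.natDegree := by
  rw [Finset.sum_congr rfl fun k hk ↦
    polyMangoldt_pow hPm hPi (Nat.one_le_iff_ne_zero.mp (Finset.mem_Icc.mp hk).1)]
  simp

theorem sum_polyMangoldt_monicDivisors {f : K[X]} (hf : f.Monic) :
    ∑ g ∈ monicDivisors f, polyMangoldt g = f.natDegree := by
  have hprime : ∀ P ∈ primeFactors f, P.Monic ∧ Irreducible P := fun P hP ↦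
    have h := (Polynomial.mem_normalizedFactors_iff hf.ne_zero).mp (mem_primeFactors.mp hP)
    ⟨h.2.1, h.1⟩
  rw [← sum_count_mul_natDegree hf, Finset.sum_congr rfl fun P hP ↦
    (sum_polyMangoldt_pow (hprime P hP).1 (hprime P hP).2 _).symm, Finset.sum_sigma']
  symm
  refine Finset.sum_of_injOn (fun x ↦ x.1 ^ x.2) ?_ ?_ ?_ fun _ _ ↦ rfl
  · rintro ⟨P, k⟩ hPk ⟨Q, j⟩ hQj (heq : P ^ k = Q ^ j)
    simp only [Finset.coe_sigma, Set.mem_sigma_iff, Finset.mem_coe, Finset.mem_Icc] at hPk hQj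
    obtain ⟨hPm, hPi⟩ := hprime P hPk.1
    obtain ⟨hQm, hQi⟩ := hprime Q hQj.1
    obtain rfl : P = Q := by
      rw [← radical_pow_of_monic_irreducible hPm hPi (k := k) (by omega), heq,
        radical_pow_of_monic_irreducible hQm hQi (by omega)]
    rw [pow_injective_of_not_isUnit hPi.not_isUnit hPi.ne_zero heq]
  · rintro ⟨P, k⟩ hPk
    simp only [Finset.coe_sigma, Set.mem_sigma_iff, Finset.mem_coe, Finset.mem_Icc] at hPk ⊢
    obtain ⟨hPm, hPi⟩ := hprime P hPk.1
    exact (pow_mem_monicDivisors_iff hPm hPi hf.ne_zero k).mpr hPk.2.2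
  · intro g hg hgimage
    refine if_neg fun hpp ↦ hgimage ?_
    obtain ⟨P, k, hPm, hPi, hk, rfl⟩ :=
      exists_monic_irreducible_pow_eq ((mem_monicDivisors hf.ne_zero).mp hg).1 hpp
    have hcount := (pow_mem_monicDivisors_iff hPm hPi hf.ne_zero k).mp hg
    have hP : P ∈ primeFactors f := mem_primeFactors.mpr (Multiset.count_pos.mp (by omega))
    exact ⟨⟨P, k⟩, by simpa [hP, hcount] using Nat.one_le_iff_ne_zero.mpr hk, rfl⟩

end Mangoldt

section LFunction

open Finset.HasAntidiagonal (antidiagonal mem_antidiagonal)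

variable {F : Type*} [Field F] {R : Type*} [CommRing R]

/-- The completely multiplicative weight on monic polynomials whose L-function is
`1 + gaussSum χ ψ * T`: at `∏ (X - aᵢ)` it takes the value `χ (∏ aᵢ) * ψ (∑ aᵢ)`. -/
def charWeight (χ : MulChar F R) (ψ : AddChar F R) (f : F[X]) : R :=
  χ ((-1) ^ f.natDegree * f.coeff 0) * ψ (-f.nextCoeff)

lemma charWeight_one (χ : MulChar F R) (ψ : AddChar F R) : charWeight χ ψ 1 = 1 := by
  simp [charWeight, nextCoeff]

lemma charWeight_mul (χ : MulChar F R) (ψ : AddChar F R) {f g : F[X]} (hf : f.Monic)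
    (hg : g.Monic) : charWeight χ ψ (f * g) = charWeight χ ψ f * charWeight χ ψ g := by
  simp only [charWeight]
  rw [hf.natDegree_mul hg, hf.nextCoeff_mul hg, mul_coeff_zero, neg_add, AddChar.map_add_eq_mul,
    pow_add, mul_mul_mul_comm, map_mul, mul_mul_mul_comm]

lemma charWeight_pow (χ : MulChar F R) (ψ : AddChar F R) {f : F[X]} (hf : f.Monic) (k : ℕ) :
    charWeight χ ψ (f ^ k) = charWeight χ ψ f ^ k := by
  induction k with
  | zero => simp [charWeight_one]
  | succ k ih => rw [pow_succ, charWeight_mul χ ψ (hf.pow k) hf, ih, pow_succ]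

section Finite

variable [Finite F]

lemma finite_setOf_monic_natDegree_eq (F : Type*) [Field F] [Finite F] (n : ℕ) :
    {f : F[X] | f.Monic ∧ f.natDegree = n}.Finite :=
  Finite.of_equiv _ ((monicEquivDegreeLT n).trans (degreeLTEquiv F n).toEquiv).symm

/-- The finite set of monic polynomials of degree `n` over a finite field. -/
def monicOfDegree (F : Type*) [Field F] [Finite F] (n : ℕ) : Finset F[X] :=
  (finite_setOf_monic_natDegree_eq F n).toFinset

lemma mem_monicOfDegree {n : ℕ} {f : F[X]} :
    f ∈ monicOfDegree F n ↔ f.Monic ∧ f.natDegree = n := by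
  simp [monicOfDegree]

lemma monicOfDegree_zero : monicOfDegree F 0 = {1} := by
  ext f
  rw [mem_monicOfDegree, Finset.mem_singleton]
  exact ⟨fun h ↦ h.1.natDegree_eq_zero.mp h.2, by rintro rfl; simp⟩

lemma add_C_mul_X_pow_mem_monicOfDegree {n : ℕ} {f : F[X]} (hf : f ∈ monicOfDegree F (n + 1))
    (b : F) : f + C b * X ^ n ∈ monicOfDegree F (n + 1) := by
  obtain ⟨hmonic, hdeg⟩ := mem_monicOfDegree.mp hf
  have hlt : (C b * X ^ n).degree < f.degree := by
    refine (degree_C_mul_X_pow_le n b).trans_lt ?_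
    rw [degree_eq_natDegree hmonic.ne_zero, hdeg]
    exact_mod_cast n.lt_succ_self
  exact mem_monicOfDegree.mpr
    ⟨hmonic.add_of_left hlt, by rw [natDegree_add_eq_left_of_degree_lt hlt, hdeg]⟩

lemma sum_monicOfDegree_sum_monicDivisors (n : ℕ) (u : F[X] → F[X] → R) :
    ∑ f ∈ monicOfDegree F n, ∑ g ∈ monicDivisors f, u g f =
      ∑ ij ∈ antidiagonal n, ∑ g ∈ monicOfDegree F ij.1, ∑ h ∈ monicOfDegree F ij.2,
        u g (g * h) := by
  simp_rw [← Finset.sum_product']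
  rw [Finset.sum_sigma', Finset.sum_sigma']
  symm
  refine Finset.sum_nbij (fun x ↦ ⟨x.2.1 * x.2.2, x.2.1⟩) ?_ ?_ ?_ fun _ _ ↦ rfl
  · rintro ⟨⟨i, j⟩, g, h⟩ hx
    simp only [Finset.mem_sigma, mem_antidiagonal, Finset.mem_product,
      mem_monicOfDegree] at hx ⊢
    obtain ⟨hij, ⟨hg, rfl⟩, hh, rfl⟩ := hx
    exact ⟨⟨hg.mul hh, by rw [hg.natDegree_mul hh, hij]⟩,
      (mem_monicDivisors (hg.mul hh).ne_zero).mpr ⟨hg, dvd_mul_right g h⟩⟩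
  · rintro ⟨⟨i, j⟩, g, h⟩ hx ⟨⟨i', j'⟩, g', h'⟩ hx' heq
    simp only [Finset.coe_sigma, Set.mem_sigma_iff, Finset.mem_coe, Finset.mem_product,
      mem_monicOfDegree] at hx hx'
    obtain ⟨-, ⟨hg, rfl⟩, -, rfl⟩ := hx
    obtain ⟨-, ⟨-, rfl⟩, -, rfl⟩ := hx'
    simp only [Sigma.mk.injEq, heq_eq_eq] at heq
    obtain ⟨hmul, rfl⟩ := heq
    rw [mul_left_cancel₀ hg.ne_zero hmul]
  · rintro ⟨f, g⟩ hx
    simp only [Finset.coe_sigma, Set.mem_sigma_iff, Finset.mem_coe, mem_monicOfDegree] at hx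
    obtain ⟨⟨hf, rfl⟩, hgf⟩ := hx
    obtain ⟨hg, h, rfl⟩ := (mem_monicDivisors hf.ne_zero).mp hgf
    have hh : h.Monic := hg.of_mul_monic_left hf
    exact ⟨⟨(g.natDegree, h.natDegree), g, h⟩,
      by simp [mem_monicOfDegree, hg, hh, hg.natDegree_mul hh], rfl⟩

lemma charWeight_add_C_mul_X_pow (χ : MulChar F R) (ψ : AddChar F R) {n : ℕ} {f : F[X]}
    (hf : f ∈ monicOfDegree F (n + 2)) (b : F) :
    charWeight χ ψ (f + C b * X ^ (n + 1)) = ψ (-b) * charWeight χ ψ f := by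
  have hdeg := (mem_monicOfDegree.mp hf).2
  have hdeg' := (mem_monicOfDegree.mp (add_C_mul_X_pow_mem_monicOfDegree hf b)).2
  have hcoeff : (f + C b * X ^ (n + 1)).coeff 0 = f.coeff 0 := by simp
  have hnext : (f + C b * X ^ (n + 1)).nextCoeff = f.nextCoeff + b := by
    simp [nextCoeff, hdeg, hdeg']
  rw [charWeight, charWeight, hdeg, hdeg', hcoeff, hnext, neg_add_rev, AddChar.map_add_eq_mul,
    mul_left_comm]

/-- The `n`-th coefficient of the L-function of `charWeight χ ψ`. -/
def lCoeff (χ : MulChar F R) (ψ : AddChar F R) (n : ℕ) : R :=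
  ∑ f ∈ monicOfDegree F n, charWeight χ ψ f

/-- The `n`-th coefficient of `T * L'(T) / L(T)`, where `L` is the L-function of
`charWeight χ ψ`. -/
def mangoldtSum (χ : MulChar F R) (ψ : AddChar F R) (n : ℕ) : R :=
  ∑ f ∈ monicOfDegree F n, polyMangoldt f * charWeight χ ψ f

lemma lCoeff_zero (χ : MulChar F R) (ψ : AddChar F R) : lCoeff χ ψ 0 = 1 := by
  rw [lCoeff, monicOfDegree_zero, Finset.sum_singleton, charWeight_one]

lemma lCoeff_add_two [IsDomain R] (χ : MulChar F R) {ψ : AddChar F R} (hψ : ψ ≠ 1) (n : ℕ) :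
    lCoeff χ ψ (n + 2) = 0 := by
  obtain ⟨a, ha⟩ := AddChar.ne_one_iff.mp hψ
  have htranslate : lCoeff χ ψ (n + 2) = ψ a * lCoeff χ ψ (n + 2) := by
    simp only [lCoeff, Finset.mul_sum]
    refine Finset.sum_nbij' (fun f ↦ f + C a * X ^ (n + 1)) (fun f ↦ f + C (-a) * X ^ (n + 1))
      (fun f hf ↦ add_C_mul_X_pow_mem_monicOfDegree hf a)
      (fun f hf ↦ add_C_mul_X_pow_mem_monicOfDegree hf (-a))
      (fun f _ ↦ by simp) (fun f _ ↦ by simp) fun f hf ↦ ?_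
    rw [charWeight_add_C_mul_X_pow χ ψ hf, ← mul_assoc, ← AddChar.map_add_eq_mul, add_neg_cancel,
      AddChar.map_zero_eq_one, one_mul]
  exact (mul_eq_zero.mp (by linear_combination -htranslate :
    (ψ a - 1) * lCoeff χ ψ (n + 2) = 0)).resolve_left (sub_ne_zero.mpr ha)

lemma mangoldtSum_zero (χ : MulChar F R) (ψ : AddChar F R) : mangoldtSum χ ψ 0 = 0 := by
  simp [mangoldtSum, monicOfDegree_zero, polyMangoldt]

theorem natCast_mul_lCoeff (χ : MulChar F R) (ψ : AddChar F R) (n : ℕ) :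
    n * lCoeff χ ψ n =
      ∑ ij ∈ antidiagonal n, mangoldtSum χ ψ ij.1 * lCoeff χ ψ ij.2 := by
  calc n * lCoeff χ ψ n
    _ = ∑ f ∈ monicOfDegree F n, ∑ g ∈ monicDivisors f, polyMangoldt g * charWeight χ ψ f := by
      rw [lCoeff, Finset.mul_sum]
      refine Finset.sum_congr rfl fun f hf ↦ ?_
      obtain ⟨hmonic, rfl⟩ := mem_monicOfDegree.mp hf
      rw [← Finset.sum_mul, ← Nat.cast_sum, sum_polyMangoldt_monicDivisors hmonic]
    _ = ∑ ij ∈ antidiagonal n, mangoldtSum χ ψ ij.1 * lCoeff χ ψ ij.2 := by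
      simp only [sum_monicOfDegree_sum_monicDivisors, mangoldtSum, lCoeff, Finset.sum_mul_sum]
      refine Finset.sum_congr rfl fun ij _ ↦ Finset.sum_congr rfl fun g hg ↦
        Finset.sum_congr rfl fun h hh ↦ ?_
      rw [charWeight_mul χ ψ (mem_monicOfDegree.mp hg).1 (mem_monicOfDegree.mp hh).1, mul_assoc]

end Finite

variable [Fintype F]

lemma monicOfDegree_one : monicOfDegree F 1 = Finset.univ.image fun a : F ↦ X - C a := by
  ext f
  simp only [mem_monicOfDegree, Finset.mem_image, Finset.mem_univ, true_and]
  constructor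
  · rintro ⟨hf, hdeg⟩
    refine ⟨-f.coeff 0, ?_⟩
    conv_rhs => rw [hf.eq_X_add_C hdeg]
    rw [map_neg, sub_neg_eq_add]
  · rintro ⟨a, rfl⟩
    exact ⟨monic_X_sub_C a, natDegree_X_sub_C a⟩

lemma lCoeff_one (χ : MulChar F R) (ψ : AddChar F R) : lCoeff χ ψ 1 = gaussSum χ ψ := by
  rw [lCoeff, monicOfDegree_one, Finset.sum_image fun a _ b _ h ↦ by simpa using h]
  simp [charWeight, gaussSum]

lemma mangoldtSum_one (χ : MulChar F R) (ψ : AddChar F R) :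
    mangoldtSum χ ψ 1 = gaussSum χ ψ := by
  simpa [Finset.Nat.antidiagonal_succ, mangoldtSum_zero, lCoeff_zero, lCoeff_one] using
    (natCast_mul_lCoeff χ ψ 1).symm

lemma mangoldtSum_add_two [IsDomain R] (χ : MulChar F R) {ψ : AddChar F R} (hψ : ψ ≠ 1) (n : ℕ) :
    mangoldtSum χ ψ (n + 2) = -gaussSum χ ψ * mangoldtSum χ ψ (n + 1) := by
  have hrec := natCast_mul_lCoeff χ ψ (n + 2)
  simp only [Finset.Nat.sum_antidiagonal_succ', lCoeff_zero, lCoeff_one, lCoeff_add_two χ hψ,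
    mul_zero, Finset.sum_const_zero, zero_add] at hrec
  linear_combination -hrec

theorem mangoldtSum_eq_neg_pow [IsDomain R] (χ : MulChar F R) {ψ : AddChar F R} (hψ : ψ ≠ 1)
    {n : ℕ} (hn : n ≠ 0) : mangoldtSum χ ψ n = -(-gaussSum χ ψ) ^ n := by
  obtain ⟨n, rfl⟩ := Nat.exists_eq_succ_of_ne_zero hn
  induction n with
  | zero => simp [mangoldtSum_one]
  | succ n ih => rw [mangoldtSum_add_two χ hψ, ih n.succ_ne_zero, mul_neg, ← pow_succ']

end LFunction

section HasseDavenport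

open IntermediateField

variable {F E : Type*} [Field F] [Field E] [Algebra F E]

/-- The field polynomial of `x` over `F`, that is the characteristic polynomial of multiplication
by `x`, in the form of a power of the minimal polynomial. -/
def fieldPolynomial (F : Type*) {E : Type*} [Field F] [Field E] [Algebra F E] (x : E) : F[X] :=
  minpoly F x ^ Module.finrank F⟮x⟯ E

section FiniteDimensional

variable [FiniteDimensional F E]

lemma natDegree_minpoly_mul_finrank_adjoin (x : E) :
    (minpoly F x).natDegree * Module.finrank F⟮x⟯ E = Module.finrank F E := by
  rw [← adjoin.finrank (.of_finite F x), Module.finrank_mul_finrank]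

lemma fieldPolynomial_eq_pow_iff {P : F[X]} (hPm : P.Monic) (hPi : Irreducible P) {k : ℕ}
    (hk : P.natDegree * k = Module.finrank F E) (x : E) :
    fieldPolynomial F x = P ^ k ↔ minpoly F x = P := by
  have hirr := minpoly.irreducible (A := F) (.of_finite F x)
  have hmonic := minpoly.monic (A := F) (.of_finite F x)
  have hfinrank : Module.finrank F⟮x⟯ E ≠ 0 := Module.finrank_pos.ne'
  have hk0 : k ≠ 0 := by
    rintro rfl
    exact Module.finrank_pos.ne hk
  constructor
  · intro h
    rw [← radical_pow_of_monic_irreducible hmonic hirr hfinrank, ← fieldPolynomial, h,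
      radical_pow_of_monic_irreducible hPm hPi hk0]
  · rintro rfl
    rw [← natDegree_minpoly_mul_finrank_adjoin x] at hk
    rw [fieldPolynomial, Nat.eq_of_mul_eq_mul_left hirr.natDegree_pos hk]

lemma norm_gen_adjoin_eq (x : E) :
    Algebra.norm F (AdjoinSimple.gen F x) =
      (-1) ^ (minpoly F x).natDegree * (minpoly F x).coeff 0 := by
  simpa [minpoly_gen F x] using
    Algebra.PowerBasis.norm_gen_eq_coeff_zero_minpoly (adjoin.powerBasis (.of_finite F x))

theorem charWeight_fieldPolynomial {R : Type*} [CommRing R] (χ : MulChar F R) (ψ : AddChar F R)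
    (x : E) : charWeight χ ψ (fieldPolynomial F x) =
      χ (Algebra.norm F x) * ψ (Algebra.trace F E x) := by
  have hx : IsIntegral F x := .of_finite F x
  rw [fieldPolynomial, charWeight_pow χ ψ (minpoly.monic hx), charWeight, mul_pow,
    ← norm_gen_adjoin_eq, ← trace_adjoinSimpleGen hx, ← map_pow, ← Algebra.norm_eq_norm_adjoin,
    ← AddChar.map_nsmul_eq_pow, ← trace_eq_trace_adjoin]

lemma fieldPolynomial_mem_monicOfDegree [Finite F] (x : E) :
    fieldPolynomial F x ∈ monicOfDegree F (Module.finrank F E) :=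
  have hmonic := minpoly.monic (A := F) (.of_finite F x)
  mem_monicOfDegree.mpr ⟨hmonic.pow _, by
    rw [fieldPolynomial, hmonic.natDegree_pow, mul_comm, natDegree_minpoly_mul_finrank_adjoin]⟩

end FiniteDimensional

lemma splits_map_of_natDegree_dvd_finrank [Finite F] [Finite E] {P : F[X]}
    (hPi : Irreducible P) (hdvd : P.natDegree ∣ Module.finrank F E) :
    (P.map (algebraMap F E)).Splits := by
  have := Fintype.ofFinite E
  have hdvd_frob := map_dvd (mapRingHom (algebraMap F E))
    (hPi.natDegree_dvd_iff_dvd_X_pow_card_pow_sub_X.mp hdvd)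
  rw [← Module.natCard_eq_pow_finrank (V := E), Nat.card_eq_fintype_card] at hdvd_frob
  simp only [coe_mapRingHom, Polynomial.map_sub, Polynomial.map_pow, map_X] at hdvd_frob
  refine Splits.of_dvd ?_ (FiniteField.X_pow_card_sub_X_ne_zero E Fintype.one_lt_card) hdvd_frob
  rw [splits_iff_card_roots, FiniteField.roots_X_pow_card_sub_X,
    FiniteField.X_pow_card_sub_X_natDegree_eq E Fintype.one_lt_card]
  rfl

variable [Fintype E]

lemma card_filter_minpoly_eq [Finite F] {P : F[X]} (hPm : P.Monic) (hPi : Irreducible P)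
    (hdvd : P.natDegree ∣ Module.finrank F E) :
    (Finset.univ.filter fun x : E ↦ minpoly F x = P).card = P.natDegree := by
  rw [← card_rootSet_eq_natDegree (PerfectField.separable_of_irreducible hPi)
    (splits_map_of_natDegree_dvd_finrank hPi hdvd), ← Set.toFinset_card]
  congr 1
  ext x
  simp only [Finset.mem_filter, Finset.mem_univ, true_and, Set.mem_toFinset, mem_rootSet]
  constructor
  · rintro rfl
    exact ⟨hPm.ne_zero, minpoly.aeval F x⟩
  · rintro ⟨-, hroot⟩
    exact (minpoly.eq_of_irreducible_of_monic hPi hroot hPm).symm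

theorem card_filter_fieldPolynomial_eq [Finite F] {f : F[X]}
    (hf : f ∈ monicOfDegree F (Module.finrank F E)) :
    (Finset.univ.filter fun x : E ↦ fieldPolynomial F x = f).card = polyMangoldt f := by
  obtain ⟨hmonic, hdeg⟩ := mem_monicOfDegree.mp hf
  by_cases hpp : IsPrimePow f
  · obtain ⟨P, k, hPm, hPi, hk, rfl⟩ := exists_monic_irreducible_pow_eq hmonic hpp
    rw [natDegree_pow, mul_comm] at hdeg
    simp only [fieldPolynomial_eq_pow_iff hPm hPi hdeg]
    rw [card_filter_minpoly_eq hPm hPi ⟨k, hdeg.symm⟩, polyMangoldt_pow hPm hPi hk]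
  · rw [polyMangoldt, if_neg hpp, Finset.card_eq_zero, Finset.filter_eq_empty_iff]
    rintro x - rfl
    exact hpp ((minpoly.irreducible (.of_finite F x)).prime.isPrimePow.pow
      Module.finrank_pos.ne')

theorem sum_mulChar_norm_mul_addChar_trace [Fintype F] {R : Type*} [CommRing R] [IsDomain R]
    (χ : MulChar F R) {ψ : AddChar F R} (hψ : ψ ≠ 1) :
    ∑ x : E, χ (Algebra.norm F x) * ψ (Algebra.trace F E x) =
      -(-gaussSum χ ψ) ^ Module.finrank F E := by
  rw [← mangoldtSum_eq_neg_pow χ hψ Module.finrank_pos.ne', mangoldtSum,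
    ← Finset.sum_fiberwise_of_maps_to fun x (_ : x ∈ Finset.univ) ↦
      fieldPolynomial_mem_monicOfDegree (F := F) x]
  refine Finset.sum_congr rfl fun f hf ↦ ?_
  rw [← card_filter_fieldPolynomial_eq hf, ← nsmul_eq_mul]
  refine Finset.sum_eq_card_nsmul fun x hx ↦ ?_
  rw [← charWeight_fieldPolynomial, (Finset.mem_filter.mp hx).2]

end HasseDavenport

section JacobiSum

variable {F : Type*} [Field F] [Fintype F] {R : Type*} [CommRing R]

/-- The Jacobi sum of `t` copies of `χ` over the hyperplane `x₁ + ⋯ + xₜ = a`. -/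
def jacobiSumAt (χ : MulChar F R) (t : ℕ) (a : F) : R :=
  ∑ v : Fin t → F, if ∑ i, v i = a then χ (∏ i, v i) else 0

lemma sum_mul_jacobiSumAt (χ : MulChar F R) (t : ℕ) (f : F → R) :
    ∑ a, f a * jacobiSumAt χ t a = ∑ v : Fin t → F, f (∑ i, v i) * χ (∏ i, v i) := by
  simp only [jacobiSumAt, Finset.mul_sum]
  rw [Finset.sum_comm]
  simp

lemma sum_jacobiSumAt (χ : MulChar F R) (t : ℕ) : ∑ a, jacobiSumAt χ t a = (∑ x, χ x) ^ t := by
  simpa [Fintype.sum_pow, map_prod] using sum_mul_jacobiSumAt χ t 1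

lemma gaussSum_pow_eq_sum_jacobiSumAt (χ : MulChar F R) (ψ : AddChar F R) (t : ℕ) :
    gaussSum χ ψ ^ t = ∑ a, ψ a * jacobiSumAt χ t a := by
  have hψ_sum (v : Fin t → F) : ψ (∑ i, v i) = ∏ i, ψ (v i) :=
    map_prod ψ.toMonoidHom (fun i ↦ Multiplicative.ofAdd (v i)) Finset.univ
  rw [sum_mul_jacobiSumAt, gaussSum, Fintype.sum_pow]
  simp only [Finset.prod_mul_distrib, map_prod, hψ_sum, mul_comm]

lemma jacobiSumAt_eq_jacobiSumAt_one {χ : MulChar F R} {t : ℕ} (hχt : χ ^ t = 1) {a : F}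
    (ha : a ≠ 0) : jacobiSumAt χ t a = jacobiSumAt χ t 1 := by
  have hχa : χ a ^ t = 1 := by
    obtain ⟨u, rfl⟩ := ha.isUnit
    rw [← MulChar.pow_apply_coe, hχt, MulChar.one_apply_coe]
  symm
  refine Fintype.sum_equiv (Equiv.piCongrRight fun _ ↦ Equiv.mulLeft₀ a ha) _ _ fun v ↦ ?_
  simp [← Finset.mul_sum, Finset.prod_mul_distrib, hχa, ha]

theorem gaussSum_pow_eq_neg_card_mul_jacobiSumAt [IsDomain R] {χ : MulChar F R} (hχ : χ ≠ 1)
    {ψ : AddChar F R} (hψ : ψ ≠ 1) {t : ℕ} (ht : t ≠ 0) (hχt : χ ^ t = 1) :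
    gaussSum χ ψ ^ t = -Fintype.card F * jacobiSumAt χ t 1 := by
  have hsplit (f : F → R) : ∑ a, f a * jacobiSumAt χ t a =
      (∑ a, f a) * jacobiSumAt χ t 1 + f 0 * (jacobiSumAt χ t 0 - jacobiSumAt χ t 1) := by
    rw [Finset.sum_mul, ← sub_eq_iff_eq_add', ← Finset.sum_sub_distrib,
      Fintype.sum_eq_single 0 fun a ha ↦ by
        rw [jacobiSumAt_eq_jacobiSumAt_one hχt ha, sub_self], mul_sub]
  have hzero :
      Fintype.card F * jacobiSumAt χ t 1 + (jacobiSumAt χ t 0 - jacobiSumAt χ t 1) = 0 := by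
    have hsum := sum_jacobiSumAt χ t
    rw [MulChar.sum_eq_zero_of_ne_one hχ, zero_pow ht] at hsum
    simpa [hsum] using (hsplit 1).symm
  rw [gaussSum_pow_eq_sum_jacobiSumAt, hsplit, AddChar.sum_eq_zero_of_ne_one hψ,
    AddChar.map_zero_eq_one]
  linear_combination hzero

end JacobiSum

section RootCounting

section Orthogonality

variable {M R : Type*} [CommMonoid M] [CommRing R] [IsDomain R]

lemma sum_units_mulChar [Fintype Mˣ] (χ : MulChar M R) :
    ∑ u : Mˣ, χ u = if χ = 1 then (Fintype.card Mˣ : R) else 0 := by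
  have hχ : χ.toMonoidHom.comp (Units.coeHom M) = 1 ↔ χ = 1 := by
    simp [MonoidHom.ext_iff, MulChar.ext_iff]
  simpa [hχ] using sum_hom_units (χ.toMonoidHom.comp (Units.coeHom M))

variable [Finite M] [Fintype Mˣ] [Fintype (MulChar M R)]
  [HasEnoughRootsOfUnity R (Monoid.exponent Mˣ)]

lemma sum_mulChar_apply_units (a : Mˣ) :
    ∑ χ : MulChar M R, χ a = if a = 1 then (Fintype.card Mˣ : R) else 0 := by
  let eval : MulChar M R →* R :=
    { toFun := fun χ ↦ χ a
      map_one' := MulChar.one_apply_coe a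
      map_mul' := fun χ φ ↦ MulChar.mul_apply χ φ a }
  have heval : eval = 1 ↔ a = 1 := by
    refine ⟨fun h ↦ ?_, fun h ↦ MonoidHom.ext fun χ ↦ by simp [eval, h]⟩
    by_contra ha
    obtain ⟨χ, hχ⟩ := MulChar.exists_apply_ne_one_of_hasEnoughRootsOfUnity M R
      (mt Units.val_eq_one.mp ha)
    exact hχ (DFunLike.congr_fun h χ)
  have hcard : Fintype.card (MulChar M R) = Fintype.card Mˣ := by
    simpa using MulChar.card_eq_card_units_of_hasEnoughRootsOfUnity M R
  have hsum := sum_hom_units eval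
  simp only [heval, hcard, Nat.cast_ite, Nat.cast_zero] at hsum
  exact hsum

theorem card_filter_pow_eq_sum_mulChar [CharZero R] [DecidableEq Mˣ]
    [DecidableEq (MulChar M R)] (n : ℕ) (y : Mˣ) :
    ((Finset.univ.filter fun x : Mˣ ↦ x ^ n = y).card : R) =
      ∑ χ : MulChar M R with χ ^ n = 1, χ y := by
  have hcard : (Fintype.card Mˣ : R) ≠ 0 := Nat.cast_ne_zero.mpr Fintype.card_ne_zero
  refine mul_right_cancel₀ hcard ?_
  calc ((Finset.univ.filter fun x : Mˣ ↦ x ^ n = y).card : R) * Fintype.card Mˣ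
    _ = ∑ x : Mˣ, ∑ χ : MulChar M R, χ (y / x ^ n : Mˣ) := by
      simp [sum_mulChar_apply_units, div_eq_one, Finset.sum_ite, eq_comm]
    _ = ∑ x : Mˣ, ∑ χ : MulChar M R, χ y * (χ ^ n) x := by
      rw [← Equiv.sum_comp (Equiv.inv Mˣ)]
      simp [MulChar.pow_apply_coe]
    _ = ∑ χ : MulChar M R, χ y * ∑ x : Mˣ, (χ ^ n) x := by
      rw [Finset.sum_comm]
      simp only [Finset.mul_sum]
    _ = (∑ χ : MulChar M R with χ ^ n = 1, χ y) * Fintype.card Mˣ := by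
      simp [sum_units_mulChar, Finset.sum_filter, Finset.sum_mul]

end Orthogonality

section Cyclic

variable {G H : Type*} [CommGroup G] [CommGroup H] [IsCyclic G] {n : ℕ}

lemma comap_range_powMonoidHom [Finite G] [Finite H] {f : G →* H} (hf : Function.Surjective f)
    (hn : n ∣ Nat.card H) :
    (powMonoidHom n : H →* H).range.comap f = (powMonoidHom n : G →* G).range := by
  have : IsCyclic H := isCyclic_of_surjective f hf
  have hle : (powMonoidHom n : G →* G).range ≤ (powMonoidHom n : H →* H).range.comap f := by
    rintro _ ⟨x, rfl⟩
    exact ⟨f x, (map_pow f x n).symm⟩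
  have hnG : n ∣ Nat.card G := hn.trans (Subgroup.card_dvd_of_surjective f hf)
  have hindex : (powMonoidHom n : G →* G).range.index =
      ((powMonoidHom n : H →* H).range.comap f).index := by
    rw [Subgroup.index_comap_of_surjective _ hf, IsCyclic.index_powMonoidHom_range,
      IsCyclic.index_powMonoidHom_range, Nat.gcd_eq_right hn, Nat.gcd_eq_right hnG]
  have hrel := Subgroup.relIndex_mul_index hle
  rw [hindex, Nat.mul_eq_right Subgroup.index_ne_zero_of_finite] at hrel
  exact (Subgroup.relIndex_eq_one.mp hrel).antisymm hle

lemma card_filter_pow_eq_of_dvd_card [Fintype G] [DecidableEq G] (hn : n ∣ Nat.card G) (y : G) :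
    (Finset.univ.filter fun x : G ↦ x ^ n = y).card =
      if y ∈ (powMonoidHom n : G →* G).range then n else 0 := by
  split_ifs with hy
  · have hker : (Finset.univ.filter fun x : G ↦ x ^ n = 1).card = n := by
      have hcard := IsCyclic.card_powMonoidHom_ker G n
      rw [Nat.gcd_eq_right hn, Nat.card_eq_fintype_card, Fintype.card_subtype] at hcard
      simpa only [MonoidHom.mem_ker, powMonoidHom_apply] using hcard
    refine Eq.trans ?_ hker
    exact MonoidHom.card_fiber_eq_of_mem_range (powMonoidHom n : G →* G) hy ⟨1, one_pow n⟩
  · rw [Finset.card_eq_zero, Finset.filter_eq_empty_iff]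
    exact fun x _ hx ↦ hy ⟨x, hx⟩

lemma card_filter_pow_eq_of_surjective [Fintype G] [Fintype H] [DecidableEq G] [DecidableEq H]
    {f : G →* H} (hf : Function.Surjective f) (hn : n ∣ Nat.card H) (y : G) :
    (Finset.univ.filter fun x : G ↦ x ^ n = y).card =
      (Finset.univ.filter fun x : H ↦ x ^ n = f y).card := by
  have : IsCyclic H := isCyclic_of_surjective f hf
  rw [card_filter_pow_eq_of_dvd_card hn,
    card_filter_pow_eq_of_dvd_card (hn.trans (Subgroup.card_dvd_of_surjective f hf)),
    if_congr (by rw [← comap_range_powMonoidHom hf hn, Subgroup.mem_comap]) rfl rfl]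

end Cyclic

theorem sum_units_comp_pow {F E : Type*} [Field F] [Fintype F] [Field E] [Fintype E] [Algebra F E]
    {R : Type*} [CommRing R] [IsDomain R] [CharZero R] [Fintype (MulChar F R)]
    [HasEnoughRootsOfUnity R (Monoid.exponent Fˣ)] {n : ℕ} (hn : n ∣ Fintype.card F - 1)
    (f : Eˣ → R) :
    ∑ x : Eˣ, f (x ^ n) =
      ∑ χ : MulChar F R with χ ^ n = 1, ∑ y : Eˣ, χ (Algebra.norm F (y : E)) * f y := by
  have hcard (y : Eˣ) : ((Finset.univ.filter fun x : Eˣ ↦ x ^ n = y).card : R) =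
      ∑ χ : MulChar F R with χ ^ n = 1, χ (Algebra.norm F (y : E)) := by
    rw [card_filter_pow_eq_of_surjective (FiniteField.unitsMap_norm_surjective F E)
      (by rwa [Nat.card_eq_fintype_card, Fintype.card_units]), card_filter_pow_eq_sum_mulChar]
    rfl
  rw [Finset.sum_comm]
  simp only [← Finset.sum_mul, ← hcard, ← nsmul_eq_mul]
  rw [← Finset.sum_fiberwise Finset.univ fun x : Eˣ ↦ x ^ n]
  refine Finset.sum_congr rfl fun y _ ↦ Finset.sum_eq_card_nsmul fun x hx ↦ ?_
  rw [(Finset.mem_filter.mp hx).2]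

end RootCounting

section TraceSum

variable {F E : Type*} [Field F] [Fintype F] [Field E] [Fintype E] [Algebra F E]
  {R : Type*} [CommRing R] [IsDomain R]

lemma sum_units_mulChar_norm_mul_addChar_trace (χ : MulChar F R) {ψ : AddChar F R} (hψ : ψ ≠ 1)
    (b : Eˣ) :
    ∑ y : Eˣ, χ (Algebra.norm F (y : E)) * ψ (Algebra.trace F E (b * y)) =
      χ⁻¹ (Algebra.norm F (b : E)) * -(-gaussSum χ ψ) ^ Module.finrank F E := by
  have hunits (f : E → R) (hf : f 0 = 0) : ∑ x, f x = ∑ y : Eˣ, f y :=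
    (Fintype.sum_of_injective Units.val Units.val_injective _ f
      (fun x hx ↦ by rwa [not_ne_iff.mp fun h ↦ hx ⟨Units.mk0 x h, rfl⟩]) fun _ ↦ rfl).symm
  have hinv : χ⁻¹ (Algebra.norm F (b : E)) * χ (Algebra.norm F (b : E)) = 1 := by
    rw [← MulChar.mul_apply, inv_mul_cancel,
      MulChar.one_apply (Algebra.norm_ne_zero_iff.mpr b.ne_zero).isUnit]
  rw [← sum_mulChar_norm_mul_addChar_trace χ hψ,
    hunits _ (by rw [Algebra.norm_zero, MulChar.map_zero, zero_mul]), Finset.mul_sum]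
  refine Fintype.sum_equiv (Equiv.mulLeft b) _ _ fun y ↦ ?_
  rw [Equiv.coe_mulLeft, Units.val_mul, map_mul (Algebra.norm F), map_mul χ, mul_assoc,
    ← mul_assoc (χ⁻¹ _), hinv, one_mul]

variable [CharZero R] [Fintype (MulChar F R)] [HasEnoughRootsOfUnity R (Monoid.exponent Fˣ)]
  {ψ : AddChar F R} {n : ℕ}

lemma sum_units_addChar_trace_mul_pow (hψ : ψ ≠ 1) (hn : n ∣ Fintype.card F - 1) (b : Eˣ) :
    ∑ x : Eˣ, ψ (Algebra.trace F E (b * (x : E) ^ n)) =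
      ∑ χ : MulChar F R with χ ^ n = 1,
        χ⁻¹ (Algebra.norm F (b : E)) * -(-gaussSum χ ψ) ^ Module.finrank F E := by
  simpa only [Units.val_pow_eq_pow_val, sum_units_mulChar_norm_mul_addChar_trace _ hψ] using
    sum_units_comp_pow hn fun y : Eˣ ↦ ψ (Algebra.trace F E (b * (y : E)))

lemma sum_units_sum_units_addChar_trace_mul_pow (hψ : ψ ≠ 1) (hn : n ∣ Fintype.card F - 1)
    (b : Eˣ) :
    ∑ c : Fˣ, ∑ x : Eˣ, ψ (Algebra.trace F E (algebraMap F E c * b * (x : E) ^ n)) =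
      ((Fintype.card F : R) - 1) *
        ∑ χ : MulChar F R with χ ^ Nat.gcd (Module.finrank F E) n = 1,
          χ⁻¹ (Algebra.norm F (b : E)) * -(-gaussSum χ ψ) ^ Module.finrank F E := by
  have hscalar (c : Fˣ) (χ : MulChar F R) : χ⁻¹ (Algebra.norm F (algebraMap F E c * b)) =
      (χ⁻¹ ^ Module.finrank F E) c * χ⁻¹ (Algebra.norm F (b : E)) := by
    rw [map_mul, map_mul, Algebra.norm_algebraMap, map_pow, MulChar.pow_apply_coe]
  have hinner (c : Fˣ) := sum_units_addChar_trace_mul_pow hψ hn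
    (Units.map (algebraMap F E : F →* E) c * b)
  simp only [Units.val_mul, Units.coe_map, MonoidHom.coe_coe, hscalar] at hinner
  rw [Finset.sum_congr rfl fun c _ ↦ hinner c, Finset.sum_comm]
  simp only [mul_assoc, ← Finset.sum_mul, sum_units_mulChar, inv_pow, inv_eq_one, ite_mul, zero_mul,
    Fintype.card_units, Nat.cast_pred Fintype.card_pos]
  rw [← Finset.sum_filter, Finset.filter_filter, Finset.mul_sum]
  simp only [and_comm, pow_gcd_eq_one]

theorem sum_units_sum_units_addChar_trace_mul_pow_eq_jacobiSumAt (hψ : ψ ≠ 1)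
    (hn : n ∣ Fintype.card F - 1) (b : Eˣ) :
    ∑ c : Fˣ, ∑ x : Eˣ, ψ (Algebra.trace F E (algebraMap F E c * b * (x : E) ^ n)) =
      ((Fintype.card F : R) - 1) *
        (-1 + (-1) ^ Module.finrank F E * Fintype.card F *
          ∑ χ : MulChar F R with χ ^ Nat.gcd (Module.finrank F E) n = 1 ∧ χ ≠ 1,
            jacobiSumAt χ (Module.finrank F E) 1 * χ⁻¹ (Algebra.norm F (b : E))) := by
  set t := Module.finrank F E
  have hnontrivial : ∀ χ : MulChar F R, χ ^ t.gcd n = 1 ∧ χ ≠ 1 →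
      χ⁻¹ (Algebra.norm F (b : E)) * -(-gaussSum χ ψ) ^ t =
        (-1) ^ t * Fintype.card F * (jacobiSumAt χ t 1 * χ⁻¹ (Algebra.norm F (b : E))) := by
    rintro χ ⟨hχl, hχ⟩
    rw [neg_pow, gaussSum_pow_eq_neg_card_mul_jacobiSumAt hχ hψ Module.finrank_pos.ne'
      (pow_gcd_eq_one.mp hχl).1]
    ring
  have htrivial : (1 : MulChar F R)⁻¹ (Algebra.norm F (b : E)) * -(-gaussSum 1 ψ) ^ t = -1 := by
    rw [inv_one, MulChar.one_apply (Algebra.norm_ne_zero_iff.mpr b.ne_zero).isUnit,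
      gaussSum_one_left hψ, neg_neg, one_pow, one_mul]
  have hone : (1 : MulChar F R) ∈ Finset.univ.filter fun χ : MulChar F R ↦ χ ^ t.gcd n = 1 := by
    simp
  rw [sum_units_sum_units_addChar_trace_mul_pow hψ hn, ← Finset.add_sum_erase _ _ hone, htrivial,
    ← Finset.filter_ne', Finset.filter_filter,
    Finset.sum_congr rfl fun χ hχ ↦ hnontrivial χ (Finset.mem_filter.mp hχ).2, Finset.mul_sum]

end TraceSum

section TraceCharacter

variable (p : ℕ) [Fact p.Prime] {F E : Type*} [Field F] [Algebra (ZMod p) F] [Field E]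
  [Fintype E] [Algebra (ZMod p) E]

/-- The canonical additive character of `F`, which is `eChar p F` bundled as an `AddChar`. -/
def traceAddChar (F : Type*) [Field F] [Algebra (ZMod p) F] : AddChar F ℂ :=
  (ZMod.stdAddChar (N := p)).compAddMonoidHom (Algebra.trace (ZMod p) F).toAddMonoidHom

lemma traceAddChar_ne_one (F : Type*) [Field F] [Finite F] [Algebra (ZMod p) F] :
    traceAddChar p F ≠ 1 := by
  obtain ⟨x, hx⟩ := Algebra.trace_surjective (ZMod p) F 1
  refine AddChar.ne_one_iff.mpr ⟨x, fun h ↦ one_ne_zero (α := ZMod p) ?_⟩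
  apply ZMod.injective_stdAddChar
  rw [AddChar.map_zero_eq_one, ← h, ← hx]
  rfl

lemma eChar_eq_traceAddChar (x : E) : eChar p E x = traceAddChar p E x := by
  have hstd := ZMod.stdAddChar_coe (N := p) ((Algebra.trace (ZMod p) E x).val : ℤ)
  rw [Int.cast_natCast, ZMod.natCast_zmod_val, Int.cast_natCast] at hstd
  exact hstd.symm

lemma eChar_eq_traceAddChar_trace [Finite F] [Algebra F E] (x : E) :
    eChar p E x = traceAddChar p F (Algebra.trace F E x) := by
  have : IsScalarTower (ZMod p) F E := .of_algebraMap_eq' (Subsingleton.elim _ _)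
  rw [eChar_eq_traceAddChar]
  exact congrArg ZMod.stdAddChar (Algebra.trace_trace (T := E) x).symm

lemma MM_zero_s5 [Fintype F] [Algebra F E] (γ : E) (mt n i0 : ℕ) :
    MM p F E γ 0 mt n i0 = ∑ c : Fˣ, ∑ x : Eˣ, traceAddChar p F
      (Algebra.trace F E (algebraMap F E c * γ ^ i0 * (x : E) ^ n)) := by
  simp only [MM, mul_zero, neg_zero, eChar_eq_traceAddChar p (0 : F), AddChar.map_zero_eq_one,
    one_mul, eChar_eq_traceAddChar_trace p (F := F)]

end TraceCharacter

theorem stmt5_general (p : ℕ) [Fact p.Prime] (F E : Type*) [Field F] [Fintype F]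
    [Field E] [Fintype E] [Algebra F E] [Algebra (ZMod p) F] [Algebra (ZMod p) E]
    {t : ℕ} (hE : Fintype.card E = Fintype.card F ^ t) (γ : Eˣ)
    {n : ℕ} (hn : n ∣ Fintype.card F - 1) (mt i0 : ℕ) :
    MM p F E (γ : E) 0 mt n i0 =
      ((Fintype.card F : ℂ) - 1) *
        (-1 + (-1 : ℂ) ^ t * (Fintype.card F : ℂ) *
          ∑ᶠ (lam : MulChar F ℂ) (_ : lam ^ Nat.gcd t n = 1 ∧ lam ≠ 1),
            jacobiS F t lam * lam⁻¹ (Algebra.norm F (γ : E) ^ i0)) := by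
  have : Fintype (MulChar F ℂ) := Fintype.ofFinite _
  obtain rfl : Module.finrank F E = t :=
    Nat.pow_right_injective Fintype.one_lt_card (Module.card_eq_pow_finrank.symm.trans hE)
  have hsum := sum_units_sum_units_addChar_trace_mul_pow_eq_jacobiSumAt
    (traceAddChar_ne_one p F) hn (γ ^ i0)
  simp only [Units.val_pow_eq_pow_val, map_pow (Algebra.norm F)] at hsum
  simp only [MM_zero_s5, hsum, Finset.sum_filter, finsum_eq_sum_of_fintype, finsum_eq_if]
  rfl

/-- If `p ∤ m/t`, `d ∣ h` and `a = 0` then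
`M_t = (q−1)·(−1 + (−1)^t·q·Σ_{λ∈H_l^*} J_t(λ)·λ̄(g^{i_0}))`, where `l = gcd(t, s/d)`. -/
theorem stmt5 (p r m s h t d l i0 : ℕ) [Fact p.Prime] (hr : 0 < r) (hm : 2 ≤ m)
    (ht : t ∣ m) (ht0 : 0 < t)
    (F E : Type*) [Field F] [Fintype F] [Field E] [Fintype E]
    [Algebra F E] [Algebra (ZMod p) F] [Algebra (ZMod p) E]
    (hF : Fintype.card F = p ^ r) (hE : Fintype.card E = Fintype.card F ^ t)
    (g : Fˣ) (hg : ∀ u : Fˣ, u ∈ Subgroup.zpowers g)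
    (γ : Eˣ) (hγ : ∀ u : Eˣ, u ∈ Subgroup.zpowers γ)
    (hγg : Algebra.norm F ((γ : Eˣ) : E) = (g : F))
    (hs : 0 < s) (hsq : s ∣ Fintype.card F - 1) (hh : h < s)
    (hd : d = Nat.gcd (m / t) s) (hl : l = Nat.gcd t (s / d))
    (hpmt : ¬ p ∣ m / t) (hdh : d ∣ h)
    (hi0 : i0 < s / d ∧ (m / (d * t)) * i0 ≡ h / d [MOD s / d])
    (a : F) (ha : a = 0) :
    MM p F E ((γ : Eˣ) : E) a (m / t) (s / d) i0 =
      ((Fintype.card F : ℂ) - 1) *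
        (-1 + (-1 : ℂ) ^ t * (Fintype.card F : ℂ) *
          ∑ᶠ (lam : MulChar F ℂ) (_ : lam ^ l = 1 ∧ lam ≠ 1),
            jacobiS F t lam * lam⁻¹ ((g : F) ^ i0)) := by
  subst ha hl
  have hsd : s / d ∣ s := Nat.div_dvd_of_dvd (hd ▸ Nat.gcd_dvd_right _ _)
  rw [← hγg]
  exact stmt5_general p F E hE γ (hsd.trans hsq) (m / t) i0

end
end

section
/- Assume s = 2, p ∤ (m/t), d | h, and a = 0. Then: if (d,l) = (1,1) then N_t = (q^{t−1} − 1)/2; if (d,l) = (1,2) then N_t = (1/2)·( q^{t−1} − 1 − (q−1)·(−1)^h·q^{(t−2)/2}·ρ((−1)^{t/2}) ); if (d,l) = (2,1) then N_t = q^{t−1} − 1. -/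
noncomputable section

open Complex Polynomial Classical

/-- `N_t(a,s,h)`: the number of elements `x` of the subfield `F_{q^t}` of `K = F_{q^m}`
with `Tr_{K/F}(x) = a` and `N_{K/F}(x) ∈ g^h·⟨g^s⟩`. -/
def NN (F K : Type*) [Field F] [Fintype F] [Field K] [Fintype K] [Algebra F K]
    (g : F) (s h t : ℕ) (a : F) : ℕ :=
  Nat.card {x : K // x ^ (Fintype.card F) ^ t = x ∧ Algebra.trace F K x = a ∧
    ∃ k : ℕ, Algebra.norm F x = g ^ (h + s * k)}

/-!
Let `E = F_{q^t}` and `n = m / t`. On `E` the trace and the norm of `K` are `n • Tr` and `N ^ n`,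
where `Tr` and `N` are those of `E` over `F`, so `N_t` counts the `x : E` with `Tr x = 0` and
`ρ (N x) ^ n = (-1) ^ h`. For even `n` and `h` the last condition only says `x ≠ 0`. For odd `n` it
is `ρ (N x) = (-1) ^ h`, and the count is governed by the sum `S` of `ρ (N x)` over the kernel of
`Tr`; since `ρ ∘ N` is the quadratic character of `E`, this is a sum of that character.

If `t` is odd, scaling by a nonsquare of `F` gives `S = -S`. If `t` is even, let `L` be the subfield
with `[E : L] = 2`. The nonzero elements of relative trace zero over `L` all have quadratic
character `-χ_L(-1)`; the sums over the other fibres of the relative trace agree with each other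
by scaling, hence are determined by the vanishing of the full character sum. Adding up the fibres
over the trace-zero elements of `L` gives `S`.
-/

section QuadraticCharacter

variable {F E : Type*} [Field F] [Fintype F] [DecidableEq F] [Field E] [Fintype E] [DecidableEq E]
  [Algebra F E]

-- In odd characteristic, by Euler's criterion, both sides are powers of `x` in `E`, with exponent
-- `(#E - 1) / (#F - 1) * ((#F - 1) / 2) = (#E - 1) / 2`.
lemma quadraticChar_norm (x : E) :
    quadraticChar F (Algebra.norm F x) = quadraticChar E x := by
  by_cases hE : ringChar E = 2
  · have hF : ringChar F = 2 := (Algebra.ringChar_eq F E).trans hE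
    rcases eq_or_ne x 0 with rfl | hx
    · rw [Algebra.norm_zero, quadraticChar_zero, quadraticChar_zero]
    · rw [quadraticChar_eq_one_of_char_two hF (Algebra.norm_ne_zero_iff.mpr hx),
        quadraticChar_eq_one_of_char_two hE hx]
  have hF : ringChar F ≠ 2 := (Algebra.ringChar_eq F E).trans_ne hE
  have hdvd : Fintype.card F - 1 ∣ Fintype.card E - 1 := by
    rw [Module.card_eq_pow_finrank (K := F) (V := E)]
    exact Nat.sub_one_dvd_pow_sub_one _ _
  have hexp : (Fintype.card E - 1) / (Fintype.card F - 1) * (Fintype.card F / 2)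
      = Fintype.card E / 2 := by
    have hoddF := FiniteField.odd_card_of_char_ne_two hF
    have hoddE := FiniteField.odd_card_of_char_ne_two hE
    have hmul := Nat.div_mul_cancel hdvd
    have hcard : Fintype.card F - 1 = Fintype.card F / 2 * 2 := by omega
    rw [hcard, ← mul_assoc] at hmul
    rw [hcard]
    omega
  refine (quadraticChar_isQuadratic F).eq_of_eq_coe (quadraticChar_isQuadratic E) hE ?_
  rw [quadraticChar_eq_pow_of_char_ne_two' hE,
    ← map_intCast (algebraMap F E), quadraticChar_eq_pow_of_char_ne_two' hF, map_pow,
    FiniteField.algebraMap_norm_eq_pow, ← pow_mul, Nat.card_eq_fintype_card,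
    Nat.card_eq_fintype_card, hexp]

lemma quadraticChar_algebraMap (a : F) :
    quadraticChar E (algebraMap F E a) = quadraticChar F a ^ Module.finrank F E := by
  rw [← quadraticChar_norm (F := F), Algebra.norm_algebraMap, map_pow]

lemma quadraticChar_pow_of_odd {n : ℕ} (hn : Odd n) (x : F) :
    quadraticChar F x ^ n = quadraticChar F x := by
  rw [← MulChar.pow_apply' _ hn.pos.ne', (quadraticChar_isQuadratic F).pow_odd hn]

lemma quadraticChar_pow_eq_one_iff_of_even {n : ℕ} (hn : Even n) (hn0 : n ≠ 0) {x : F} :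
    quadraticChar F x ^ n = 1 ↔ x ≠ 0 := by
  rcases eq_or_ne x 0 with rfl | hx
  · rw [quadraticChar_zero, zero_pow hn0]
    exact iff_of_false zero_ne_one (not_not_intro rfl)
  · obtain ⟨k, rfl⟩ := hn.two_dvd
    rw [pow_mul, quadraticChar_sq_one hx, one_pow]
    exact iff_of_true rfl hx

lemma two_mul_card_filter_quadraticChar_eq (s : Finset F) (ε : ℤˣ) :
    2 * ((s.filter fun x ↦ quadraticChar F x = ε).card : ℤ)
      = (s.erase 0).card + ε * ∑ x ∈ s, quadraticChar F x := by
  have key (x : F) : 2 * (if quadraticChar F x = ε then (1 : ℤ) else 0)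
      = (if x ≠ 0 then 1 else 0) + ε * quadraticChar F x := by
    rcases eq_or_ne x 0 with rfl | hx
    · simp [eq_comm]
    · rcases quadraticChar_dichotomy hx with h | h <;>
        rcases Int.units_eq_one_or ε with rfl | rfl <;> simp [h, hx]
  rw [← Finset.filter_ne', Finset.card_filter, Finset.card_filter, Nat.cast_sum, Nat.cast_sum,
    Finset.mul_sum, Finset.mul_sum, ← Finset.sum_add_distrib]
  push_cast
  exact Finset.sum_congr rfl fun x _ ↦ key x

lemma quadraticChar_eq_neg_one_of_forall_mem_zpowers (hF : ringChar F ≠ 2) {g : Fˣ}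
    (hg : ∀ u : Fˣ, u ∈ Subgroup.zpowers g) : quadraticChar F (g : F) = -1 := by
  obtain ⟨a, ha⟩ := quadraticChar_exists_neg_one' hF
  obtain ⟨j, rfl⟩ := mem_powers_iff_mem_zpowers.mpr (hg a)
  refine (quadraticChar_dichotomy g.ne_zero).resolve_left fun h ↦ ?_
  simp only [Units.val_pow_eq_pow_val, map_pow, h, one_pow] at ha
  exact absurd ha (by norm_num)

lemma exists_eq_pow_add_two_mul_iff (hF : ringChar F ≠ 2) {g : Fˣ}
    (hg : ∀ u : Fˣ, u ∈ Subgroup.zpowers g) (h : ℕ) (y : F) :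
    (∃ k : ℕ, y = (g : F) ^ (h + 2 * k)) ↔ quadraticChar F y = (-1) ^ h := by
  have hχg := quadraticChar_eq_neg_one_of_forall_mem_zpowers hF hg
  have hgh : (g : F) ^ h ≠ 0 := pow_ne_zero h g.ne_zero
  constructor
  · rintro ⟨k, rfl⟩
    rw [map_pow, hχg, pow_add, pow_mul, neg_one_sq, one_pow, mul_one]
  · intro hy
    have hy0 : y ≠ 0 := by
      rintro rfl
      exact pow_ne_zero h (by norm_num) (hy.symm.trans quadraticChar_zero)
    have hsq : IsSquare (y / (g : F) ^ h) := by
      rw [← quadraticChar_one_iff_isSquare (div_ne_zero hy0 hgh)]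
      have hmul : quadraticChar F (y / (g : F) ^ h) * (-1) ^ h = (-1) ^ h := by
        rw [← hχg, ← map_pow, ← map_mul, div_mul_cancel₀ _ hgh, hy, map_pow, hχg]
      exact (mul_eq_right₀ (by simp)).mp hmul
    obtain ⟨v, hv⟩ := hsq
    have hv0 : v ≠ 0 := by
      rintro rfl
      simp [hy0] at hv
    obtain ⟨k, hk⟩ := mem_powers_iff_mem_zpowers.mpr (hg (Units.mk0 v hv0))
    have hk' : (g : F) ^ k = v := by simpa using congrArg Units.val hk
    refine ⟨k, ?_⟩
    rw [pow_add, mul_comm 2, pow_mul, hk', sq, ← hv, mul_div_cancel₀ _ hgh]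

end QuadraticCharacter

section TraceFibres

variable (F E : Type*) [Field F] [DecidableEq F] [Field E] [Fintype E] [Algebra F E]

lemma card_filter_trace_eq_zero [Fintype F] :
    (Finset.univ.filter fun x : E ↦ Algebra.trace F E x = 0).card
      = Fintype.card F ^ (Module.finrank F E - 1) := by
  have hrank := (Algebra.trace F E).finrank_range_add_finrank_ker
  rw [LinearMap.range_eq_top.mpr (Algebra.trace_surjective F E), finrank_top,
    Module.finrank_self] at hrank
  have hker : Fintype.card (LinearMap.ker (Algebra.trace F E)) = _ :=
    Module.card_eq_pow_finrank (K := F)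
  rw [← hrank, Nat.add_sub_cancel_left, ← hker, Fintype.card_subtype]
  simp only [LinearMap.mem_ker]

variable [DecidableEq E]

/-- The sum of the quadratic character of `E` over the elements of trace `c` in `F`. When `F` is
finite, `quadraticChar_norm` identifies it with the sum of `ρ (N x)` over `Tr x = c`, so it is the
excess of square over nonsquare norms among these elements. -/
def traceQuadraticSum (c : F) : ℤ :=
  ∑ x : E with Algebra.trace F E x = c, quadraticChar E x

variable {F}

lemma traceQuadraticSum_eq_sum_of_tower (L : Type*) [Field L] [Fintype L] [DecidableEq L]
    [Algebra F L] [Algebra L E] [IsScalarTower F L E] (a : F) :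
    traceQuadraticSum F E a
      = ∑ c : L with Algebra.trace F L c = a, traceQuadraticSum L E c := by
  simp only [traceQuadraticSum]
  rw [Finset.sum_fiberwise_eq_sum_filter]
  simp [Algebra.trace_trace]

variable [Fintype F]

lemma traceQuadraticSum_mul {a : F} (ha : a ≠ 0) (c : F) :
    traceQuadraticSum F E (a * c)
      = quadraticChar F a ^ Module.finrank F E * traceQuadraticSum F E c := by
  have ha' : algebraMap F E a ≠ 0 := by simpa using ha
  have htrace (x : E) :
      Algebra.trace F E (algebraMap F E a * x) = a * Algebra.trace F E x := by
    rw [← Algebra.smul_def, map_smul, smul_eq_mul]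
  rw [traceQuadraticSum, traceQuadraticSum, Finset.mul_sum, ← quadraticChar_algebraMap (E := E)]
  refine (Finset.sum_equiv (Equiv.mulLeft₀ _ ha') (fun x ↦ ?_) fun x _ ↦ ?_).symm
  · simp [htrace, ha]
  · rw [Equiv.mulLeft₀_apply, map_mul]

omit [Fintype F] in
lemma traceQuadraticSum_zero_of_odd_finrank [Finite F] (hF : ringChar F ≠ 2)
    (hodd : Odd (Module.finrank F E)) : traceQuadraticSum F E 0 = 0 := by
  have := Fintype.ofFinite F
  obtain ⟨a, ha⟩ := quadraticChar_exists_neg_one hF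
  have ha0 : a ≠ 0 := by
    rintro rfl
    simp at ha
  have hneg := traceQuadraticSum_mul E ha0 0
  rw [mul_zero, ha, hodd.neg_one_pow] at hneg
  omega

variable (F) in
lemma sum_traceQuadraticSum (hE : ringChar E ≠ 2) : ∑ c : F, traceQuadraticSum F E c = 0 := by
  simp only [traceQuadraticSum]
  rw [Finset.sum_fiberwise, quadraticChar_sum_zero hE]

end TraceFibres

section QuadraticExtension

variable {L E : Type*} [Field L] [Fintype L] [DecidableEq L] [Field E] [Fintype E] [DecidableEq E]
  [Algebra L E]

-- Trace zero means `x ^ #L = -x`, so `x ^ (#L - 1) = -1` and Euler's criterion applies through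
-- `(#L ^ 2 - 1) / 2 = (#L - 1) * ((#L - 1) / 2 + 1)`.
lemma quadraticChar_of_trace_eq_zero (hE : ringChar E ≠ 2) (hLE : Module.finrank L E = 2) {x : E}
    (hx0 : x ≠ 0) (hx : Algebra.trace L E x = 0) :
    quadraticChar E x = -quadraticChar L (-1) := by
  have hL : ringChar L ≠ 2 := (Algebra.ringChar_eq L E).trans_ne hE
  obtain ⟨n, hn⟩ : Odd (Fintype.card L) :=
    Nat.odd_iff.mpr (FiniteField.odd_card_of_char_ne_two hL)
  have hpow : x ^ (2 * n) = -1 := by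
    have htrace := FiniteField.algebraMap_trace_eq_sum_pow L E x
    rw [hx, map_zero, hLE, Finset.sum_range_succ, Finset.sum_range_one, pow_zero, pow_one, pow_one,
      Nat.card_eq_fintype_card, hn, pow_succ] at htrace
    exact mul_right_cancel₀ hx0 (by linear_combination -htrace)
  have hhalf : Fintype.card E / 2 = 2 * n * (n + 1) := by
    rw [Module.card_eq_pow_finrank (K := L) (V := E), hLE, hn,
      show (2 * n + 1) ^ 2 = 2 * (2 * n * (n + 1)) + 1 by ring]
    omega
  have hcast : (quadraticChar E x : E) = (-quadraticChar L (-1) : ℤ) := by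
    rw [quadraticChar_eq_pow_of_char_ne_two' hE, hhalf, pow_mul, hpow, Int.cast_neg,
      ← map_intCast (algebraMap L E), quadraticChar_eq_pow_of_char_ne_two' hL,
      show Fintype.card L / 2 = n by omega, map_pow, map_neg, map_one, pow_succ]
    ring
  refine Int.cast_injOn_of_ringChar_ne_two hE (quadraticChar_isQuadratic E x) ?_ hcast
  rcases quadraticChar_isQuadratic L (-1) with h | h | h <;> simp [h]

lemma traceQuadraticSum_zero_of_finrank_eq_two (hE : ringChar E ≠ 2)
    (hLE : Module.finrank L E = 2) :
    traceQuadraticSum L E 0 = quadraticChar L (-1) * (1 - Fintype.card L) := by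
  have hzero : (0 : E) ∈ Finset.univ.filter fun x : E ↦ Algebra.trace L E x = 0 := by simp
  have hcard := Finset.card_erase_add_one hzero
  rw [card_filter_trace_eq_zero, hLE, pow_one] at hcard
  rw [traceQuadraticSum, ← Finset.add_sum_erase _ _ hzero, quadraticChar_zero, zero_add,
    Finset.sum_congr rfl fun x hx ↦ quadraticChar_of_trace_eq_zero hE hLE
      (Finset.ne_of_mem_erase hx) (Finset.mem_filter.mp (Finset.mem_of_mem_erase hx)).2,
    Finset.sum_const, ← hcard]
  push_cast
  ring

lemma traceQuadraticSum_of_finrank_eq_two (hE : ringChar E ≠ 2) (hLE : Module.finrank L E = 2)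
    (c : L) :
    traceQuadraticSum L E c
      = quadraticChar L (-1) * (1 - if c = 0 then (Fintype.card L : ℤ) else 0) := by
  have h0 := traceQuadraticSum_zero_of_finrank_eq_two hE hLE
  split_ifs with hc
  · rw [hc, h0]
  have hconst (b : L) (hb : b ≠ 0) : traceQuadraticSum L E b = traceQuadraticSum L E c := by
    rw [← div_mul_cancel₀ b hc, traceQuadraticSum_mul E (div_ne_zero hb hc), hLE,
      quadraticChar_sq_one (div_ne_zero hb hc), one_mul]
  have hsum := sum_traceQuadraticSum L E hE
  rw [← Finset.add_sum_erase _ _ (Finset.mem_univ 0), h0,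
    Finset.sum_congr rfl fun b hb ↦ hconst b (Finset.ne_of_mem_erase hb), Finset.sum_const,
    Finset.card_erase_of_mem (Finset.mem_univ 0), Finset.card_univ, nsmul_eq_mul,
    Nat.cast_sub Fintype.card_pos, Nat.cast_one] at hsum
  have hcard : (Fintype.card L : ℤ) - 1 ≠ 0 :=
    sub_ne_zero.mpr (by exact_mod_cast Fintype.one_lt_card.ne')
  exact mul_left_cancel₀ hcard (by linear_combination hsum)

variable (L E) in
lemma traceQuadraticSum_zero_of_tower (F : Type*) [Field F] [Fintype F] [DecidableEq F]
    [Algebra F E] [Algebra F L] [IsScalarTower F L E] (hE : ringChar E ≠ 2)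
    (hLE : Module.finrank L E = 2) :
    traceQuadraticSum F E 0 = quadraticChar L (-1) *
      (Fintype.card F ^ (Module.finrank F L - 1) - Fintype.card F ^ Module.finrank F L) := by
  rw [traceQuadraticSum_eq_sum_of_tower E L,
    Finset.sum_congr rfl fun c _ ↦ traceQuadraticSum_of_finrank_eq_two hE hLE c,
    ← Finset.mul_sum, Finset.sum_sub_distrib, Finset.sum_ite_eq', if_pos (by simp),
    Finset.sum_const, card_filter_trace_eq_zero, nsmul_one,
    Module.card_eq_pow_finrank (K := F) (V := L), Nat.cast_pow, Nat.cast_pow]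

end QuadraticExtension

section FixedField

variable (F K : Type*) [Field F] [Fintype F] [Field K] [Finite K] [Algebra F K] (t : ℕ)

/-- The fixed field of the `t`-th power of the `F`-Frobenius of `K`. It is the subfield
`F_{q^t}` of `K = F_{q^m}` when `t ∣ m`. -/
def frobeniusFixedField : IntermediateField F K :=
  IntermediateField.fixedField
    (Subgroup.zpowers (FiniteField.frobeniusAlgEquivOfAlgebraic F K ^ t))

variable {F K t}

lemma mem_frobeniusFixedField {x : K} :
    x ∈ frobeniusFixedField F K t ↔ x ^ Fintype.card F ^ t = x := by
  set τ := FiniteField.frobeniusAlgEquivOfAlgebraic F K ^ t with hτ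
  have hτx : τ x = x ^ Fintype.card F ^ t := by
    rw [hτ, AlgEquiv.coe_pow, FiniteField.coe_frobeniusAlgEquivOfAlgebraic_iterate]
  have hstab : Subgroup.zpowers τ ≤ MulAction.stabilizer Gal(K/F) x ↔ τ x = x :=
    Subgroup.zpowers_le
  rw [← hτx, ← hstab]
  exact IntermediateField.mem_fixedField_iff _ _

lemma finrank_right_frobeniusFixedField (ht : t ∣ Module.finrank F K) :
    Module.finrank (frobeniusFixedField F K t) K = Module.finrank F K / t := by
  rw [frobeniusFixedField, IntermediateField.finrank_fixedField_eq_card, Nat.card_zpowers,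
    orderOf_pow, FiniteField.orderOf_frobeniusAlgEquivOfAlgebraic, Nat.gcd_eq_right ht]

lemma finrank_frobeniusFixedField (ht : t ∣ Module.finrank F K) :
    Module.finrank F (frobeniusFixedField F K t) = t := by
  have hmul := Module.finrank_mul_finrank F (frobeniusFixedField F K t) K
  rw [finrank_right_frobeniusFixedField ht] at hmul
  have hpos : 0 < Module.finrank F K / t :=
    Nat.div_pos (Nat.le_of_dvd Module.finrank_pos ht) (Nat.pos_of_dvd_of_pos ht Module.finrank_pos)
  exact Nat.eq_of_mul_eq_mul_right hpos (hmul.trans (Nat.mul_div_cancel' ht).symm)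

end FixedField

lemma traceQuadraticSum_zero_of_finrank_eq_two_mul {F E : Type*} [Field F] [Fintype F]
    [DecidableEq F] [Field E] [Fintype E] [DecidableEq E] [Algebra F E] (hF : ringChar F ≠ 2)
    {k : ℕ} (hk : Module.finrank F E = 2 * k) :
    traceQuadraticSum F E 0
      = -(quadraticChar F ((-1) ^ k) * (Fintype.card F - 1) * Fintype.card F ^ (k - 1)) := by
  have hk0 : 0 < k := by
    have := Module.finrank_pos (R := F) (M := E)
    omega
  have hdvd : k ∣ Module.finrank F E := hk ▸ dvd_mul_left k 2
  let L := frobeniusFixedField F E k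
  have hFL : Module.finrank F L = k := finrank_frobeniusFixedField hdvd
  have hLE : Module.finrank L E = 2 := by
    rw [finrank_right_frobeniusFixedField hdvd, hk, Nat.mul_div_cancel _ hk0]
  have hE : ringChar E ≠ 2 := (Algebra.ringChar_eq F E).symm.trans_ne hF
  have hχ : quadraticChar L (-1) = quadraticChar F ((-1) ^ k) := by
    rw [map_pow, ← hFL, ← quadraticChar_algebraMap (E := L), map_neg (algebraMap F L),
      map_one]
  rw [traceQuadraticSum_zero_of_tower L E F hE hLE, hχ, hFL,
    ← mul_pow_sub_one hk0.ne' (Fintype.card F : ℤ)]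
  ring

section Counting

variable {F K : Type*} [Field F] [Fintype F] [Field K] [Fintype K] [Algebra F K]

lemma NN_eq_card_frobeniusFixedField (g : F) (s h t : ℕ) (a : F) :
    NN F K g s h t a = Nat.card {x : frobeniusFixedField F K t //
      Module.finrank (frobeniusFixedField F K t) K • Algebra.trace F _ x = a ∧
      ∃ k : ℕ, Algebra.norm F x ^ Module.finrank (frobeniusFixedField F K t) K
        = g ^ (h + s * k)} := by
  have hmem (x : K) : x ^ Fintype.card F ^ t = x ↔ x ∈ frobeniusFixedField F K t :=
    mem_frobeniusFixedField.symm
  set E := frobeniusFixedField F K t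
  have htrace (x : E) : Algebra.trace F K x = Module.finrank E K • Algebra.trace F E x := by
    rw [← Algebra.trace_trace (S := E), ← IntermediateField.algebraMap_apply,
      Algebra.trace_algebraMap, map_nsmul]
  have hnorm (x : E) : Algebra.norm F (x : K) = Algebra.norm F x ^ Module.finrank E K := by
    rw [← Algebra.norm_norm (S := E), ← IntermediateField.algebraMap_apply,
      Algebra.norm_algebraMap, map_pow]
  simp only [NN, hmem, ← htrace, ← hnorm]
  exact Nat.card_congr (Equiv.subtypeSubtypeEquivSubtypeInter (· ∈ E) fun x : K ↦
    Algebra.trace F K x = a ∧ ∃ k : ℕ, Algebra.norm F x = g ^ (h + s * k)).symm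

variable [DecidableEq F] {g : Fˣ} (hg : ∀ u : Fˣ, u ∈ Subgroup.zpowers g)
  (hF : ringChar F ≠ 2) {t : ℕ} (ht : t ∣ Module.finrank F K)
  (hcast : ((Module.finrank F K / t : ℕ) : F) ≠ 0)

include hg hF ht hcast

lemma NN_two_zero_eq_card (h : ℕ) :
    NN F K g 2 h t 0 =
      (Finset.univ.filter fun x : frobeniusFixedField F K t ↦ Algebra.trace F _ x = 0 ∧
        quadraticChar _ x ^ (Module.finrank F K / t) = (-1) ^ h).card := by
  rw [NN_eq_card_frobeniusFixedField, finrank_right_frobeniusFixedField ht,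
    Nat.card_eq_fintype_card, Fintype.card_subtype]
  simp only [exists_eq_pow_add_two_mul_iff hF hg, nsmul_eq_mul, mul_eq_zero, hcast, false_or,
    map_pow, quadraticChar_norm]

lemma two_mul_NN_two_zero_of_odd (hodd : Odd (Module.finrank F K / t)) (h : ℕ) :
    2 * (NN F K g 2 h t 0 : ℤ) = Fintype.card F ^ (t - 1) - 1
      + (-1) ^ h * traceQuadraticSum F (frobeniusFixedField F K t) 0 := by
  let E := frobeniusFixedField F K t
  have hcount := two_mul_card_filter_quadraticChar_eq
    (Finset.univ.filter fun x : E ↦ Algebra.trace F E x = 0) ((-1) ^ h)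
  rw [Finset.card_erase_of_mem (by simp), card_filter_trace_eq_zero,
    finrank_frobeniusFixedField ht, Finset.filter_filter,
    Nat.cast_sub (Nat.one_le_pow _ _ Fintype.card_pos)] at hcount
  simp only [NN_two_zero_eq_card hg hF ht hcast, quadraticChar_pow_of_odd hodd]
  push_cast at hcount
  exact hcount

omit [DecidableEq F] in
theorem NN_two_zero_of_odd_of_odd (hodd : Odd (Module.finrank F K / t)) (htodd : Odd t) (h : ℕ) :
    (NN F K g 2 h t 0 : ℚ) = ((Fintype.card F : ℚ) ^ (t - 1) - 1) / 2 := by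
  have := Classical.decEq F
  have hcount := two_mul_NN_two_zero_of_odd hg hF ht hcast hodd h
  rw [traceQuadraticSum_zero_of_odd_finrank _ hF (by rwa [finrank_frobeniusFixedField ht])]
    at hcount
  qify at hcount
  linarith

theorem NN_two_zero_of_odd_of_even (hodd : Odd (Module.finrank F K / t)) (hteven : Even t)
    (h : ℕ) :
    (NN F K g 2 h t 0 : ℚ) =
      (1 / 2) * ((Fintype.card F : ℚ) ^ (t - 1) - 1 -
        ((Fintype.card F : ℚ) - 1) * (-1 : ℚ) ^ h * (Fintype.card F : ℚ) ^ ((t - 2) / 2) *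
          (quadraticChar F ((-1 : F) ^ (t / 2)) : ℚ)) := by
  have hcount := two_mul_NN_two_zero_of_odd hg hF ht hcast hodd h
  rw [traceQuadraticSum_zero_of_finrank_eq_two_mul hF (k := t / 2)
    (by rw [finrank_frobeniusFixedField ht, Nat.two_mul_div_two_of_even hteven])] at hcount
  rw [show (t - 2) / 2 = t / 2 - 1 by omega]
  qify at hcount
  linarith

omit [DecidableEq F] in
theorem NN_two_zero_of_even_of_even (heven : Even (Module.finrank F K / t)) {h : ℕ}
    (hh : Even h) : NN F K g 2 h t 0 = Fintype.card F ^ (t - 1) - 1 := by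
  have := Classical.decEq F
  have hne : Module.finrank F K / t ≠ 0 := fun h0 ↦ hcast (by rw [h0, Nat.cast_zero])
  rw [NN_two_zero_eq_card hg hF ht hcast]
  simp only [hh.neg_one_pow, quadraticChar_pow_eq_one_iff_of_even heven hne]
  rw [← Finset.filter_filter, Finset.filter_ne', Finset.card_erase_of_mem (by simp),
    card_filter_trace_eq_zero, finrank_frobeniusFixedField ht]

end Counting

/-- The values of `N_t` for `s = 2`, `a = 0`, assuming `p ∤ m/t` and `d ∣ h`,
where `d = gcd(m/t, 2)`, `l = gcd(t, 2/d)` and `ρ` is the quadratic character of `F`. -/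
theorem stmt8 (p r m h t d l : ℕ) [Fact p.Prime] (hr : 0 < r) (hm : 2 ≤ m)
    (ht : t ∣ m) (ht0 : 0 < t)
    (F K : Type*) [Field F] [Fintype F] [DecidableEq F] [Field K] [Fintype K] [Algebra F K]
    (hF : Fintype.card F = p ^ r) (hK : Fintype.card K = Fintype.card F ^ m)
    (g : Fˣ) (hg : ∀ u : Fˣ, u ∈ Subgroup.zpowers g)
    (hsq : 2 ∣ Fintype.card F - 1) (hh : h < 2)
    (hd : d = Nat.gcd (m / t) 2) (hl : l = Nat.gcd t (2 / d))
    (hpmt : ¬ p ∣ m / t) (hdh : d ∣ h)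
    (a : F) (ha : a = 0) :
    (d = 1 ∧ l = 1 →
      (NN F K (g : F) 2 h t a : ℚ) = ((Fintype.card F : ℚ) ^ (t - 1) - 1) / 2) ∧
    (d = 1 ∧ l = 2 →
      (NN F K (g : F) 2 h t a : ℚ) =
        (1 / 2) * ((Fintype.card F : ℚ) ^ (t - 1) - 1 -
          ((Fintype.card F : ℚ) - 1) * (-1 : ℚ) ^ h * (Fintype.card F : ℚ) ^ ((t - 2) / 2) *
            (quadraticChar F ((-1 : F) ^ (t / 2)) : ℚ))) ∧
    (d = 2 ∧ l = 1 →
      (NN F K (g : F) 2 h t a : ℚ) = (Fintype.card F : ℚ) ^ (t - 1) - 1) := by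
  have hF2 : ringChar F ≠ 2 := by
    have := Fintype.one_lt_card (α := F)
    rw [Ne, FiniteField.even_card_iff_char_two]
    omega
  obtain rfl : m = Module.finrank F K :=
    Nat.pow_right_injective Fintype.one_lt_card (hK.symm.trans Module.card_eq_pow_finrank)
  have hcast : ((Module.finrank F K / t : ℕ) : F) ≠ 0 := by
    have := charP_of_card_eq_prime_pow hF
    rwa [Ne, CharP.cast_eq_zero_iff F p]
  subst ha
  refine ⟨?_, ?_, ?_⟩ <;> rintro ⟨rfl, rfl⟩
  · exact NN_two_zero_of_odd_of_odd hg hF2 ht hcast (Nat.coprime_two_right.mp hd.symm)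
      (Nat.coprime_two_right.mp hl.symm) h
  · exact NN_two_zero_of_odd_of_even hg hF2 ht hcast (Nat.coprime_two_right.mp hd.symm)
      (even_iff_two_dvd.mpr (Nat.gcd_eq_right_iff_dvd.mp hl.symm)) h
  · rw [NN_two_zero_of_even_of_even hg hF2 ht hcast
      (even_iff_two_dvd.mpr (Nat.gcd_eq_right_iff_dvd.mp hd.symm)) (even_iff_two_dvd.mpr hdh),
      Nat.cast_sub (Nat.one_le_pow _ _ Fintype.card_pos), Nat.cast_pow, Nat.cast_one]

end
end
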